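/- arXiv:1605.05656 — 8 statements merged into one kernel-verified Lean document; each statement's English description precedes it below -/
import Mathlib

section
/- Let Ω be a compact Hausdorff space and let A be a C*-algebra. Suppose that (i) every weak-2-local derivation on A is linear and a derivation, and (ii) every derivation on C(Ω,A) is inner, i.e. for every derivation D : C(Ω,A) → C(Ω,A) there exists Z ∈ C(Ω,A) with D(X) = ZX − XZ for all X. Then every weak-2-local derivation Δ : C(Ω,A) → C(Ω,A) is linear and a derivation. -/
/-- A (complex-linear) derivation on a complex normed algebra. -/
def IsCDerivation {B : Type*} [NonUnitalNormedRing B] [NormedSpace ℂ B] (D : B → B) : Prop :=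
  (∀ x y : B, D (x + y) = D x + D y) ∧ (∀ (c : ℂ) (x : B), D (c • x) = c • D x) ∧
  (∀ x y : B, D (x * y) = D x * y + x * D y)

def IsWeak2LocalDerivation {B : Type*} [NonUnitalNormedRing B] [NormedSpace ℂ B]
    (Δ : B → B) : Prop :=
  ∀ (x y : B) (φ : B →L[ℂ] ℂ), ∃ D : B → B,
    IsCDerivation D ∧ φ (Δ x) = φ (D x) ∧ φ (Δ y) = φ (D y)

theorem stmt0 {Ω A : Type*} [TopologicalSpace Ω] [CompactSpace Ω] [T2Space Ω]
    [NormedRing A] [StarRing A] [CStarRing A] [NormedAlgebra ℂ A] [CompleteSpace A]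
    [StarModule ℂ A]
    (hA : ∀ Δ : A → A, IsWeak2LocalDerivation Δ → IsCDerivation Δ)
    (hInner : ∀ D : C(Ω, A) → C(Ω, A), IsCDerivation D →
      ∃ Z : C(Ω, A), ∀ X, D X = Z * X - X * Z)
    (Δ : C(Ω, A) → C(Ω, A)) (hΔ : IsWeak2LocalDerivation Δ) :
    IsCDerivation Δ := by
  have key : ∀ (t : Ω) (X Y : C(Ω, A)) (φ : A →L[ℂ] ℂ), ∃ z : A,
      φ (Δ X t) = φ (z * X t - X t * z) ∧ φ (Δ Y t) = φ (z * Y t - Y t * z) := by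
    intro t X Y φ
    obtain ⟨D, hD, h1, h2⟩ := hΔ X Y (φ.comp (ContinuousMap.evalCLM ℂ t))
    obtain ⟨Z, hZ⟩ := hInner D hD
    rw [hZ] at h1 h2
    exact ⟨Z t, h1, h2⟩
  have hder : ∀ t : Ω, IsCDerivation (fun a : A => Δ (ContinuousMap.const Ω a) t) := by
    intro t
    apply hA
    intro x y φ
    obtain ⟨z, h1, h2⟩ := key t (ContinuousMap.const Ω x) (ContinuousMap.const Ω y) φ
    refine ⟨fun a => z * a - a * z, ⟨?_, ?_, ?_⟩, h1, h2⟩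
    · intro a b
      noncomm_ring
    · intro c a
      simp only [mul_smul_comm, smul_mul_assoc, smul_sub]
    · intro a b
      noncomm_ring
  have hloc : ∀ (t : Ω) (X : C(Ω, A)), Δ X t = Δ (ContinuousMap.const Ω (X t)) t := by
    intro t X
    by_contra hne
    obtain ⟨φ, hφ⟩ := SeparatingDual.exists_separating_of_ne (R := ℂ) hne
    obtain ⟨z, h1, h2⟩ := key t X (ContinuousMap.const Ω (X t)) φ
    exact hφ (h1.trans h2.symm)
  refine ⟨?_, ?_, ?_⟩
  · intro X Y
    ext t
    rw [ContinuousMap.add_apply, hloc t (X + Y), hloc t X, hloc t Y]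
    exact (hder t).1 (X t) (Y t)
  · intro c X
    ext t
    rw [ContinuousMap.smul_apply, hloc t (c • X), hloc t X]
    exact (hder t).2.1 c (X t)
  · intro X Y
    ext t
    rw [ContinuousMap.add_apply, ContinuousMap.mul_apply, ContinuousMap.mul_apply,
      hloc t (X * Y), hloc t X, hloc t Y]
    exact (hder t).2.2 (X t) (Y t)
end

section
/- Let Ω be a compact Hausdorff space and let A be a C*-algebra such that every derivation on C(Ω,A) is inner. If Δ : C(Ω,A) → C(Ω,A) is a weak-2-local derivation, then for every t ∈ Ω and every X ∈ C(Ω,A) one has Δ(X)(t) = Δ(â)(t), where a = X(t) and â ∈ C(Ω,A) denotes the constant function with value a. -/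
theorem stmt1 {Ω A : Type*} [TopologicalSpace Ω] [CompactSpace Ω] [T2Space Ω]
    [NormedRing A] [StarRing A] [CStarRing A] [NormedAlgebra ℂ A] [CompleteSpace A]
    [StarModule ℂ A]
    (hInner : ∀ D : C(Ω, A) → C(Ω, A), IsCDerivation D →
      ∃ Z : C(Ω, A), ∀ X, D X = Z * X - X * Z)
    (Δ : C(Ω, A) → C(Ω, A)) (hΔ : IsWeak2LocalDerivation Δ) :
    ∀ (t : Ω) (X : C(Ω, A)), Δ X t = Δ (ContinuousMap.const Ω (X t)) t := by
  intro t X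
  let e : C(Ω, A) →L[ℂ] A := ContinuousMap.evalCLM ℂ t
  have he : ∀ Y : C(Ω, A), e Y = Y t := fun Y => rfl
  refine (SeparatingDual.eq_iff_forall_dual_eq (R := ℂ)).2 fun φ => ?_
  obtain ⟨D, hD, h1, h2⟩ := hΔ X (ContinuousMap.const Ω (X t)) (φ.comp e)
  obtain ⟨Z, hZ⟩ := hInner D hD
  simp only [ContinuousLinearMap.comp_apply, he, hZ, ContinuousMap.sub_apply,
    ContinuousMap.mul_apply, ContinuousMap.const_apply] at h1 h2
  exact h1.trans h2.symm
end

section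
/- Let Ω be a compact Hausdorff space and let H be a complex Hilbert space. Then every weak-2-local derivation Δ : C(Ω,B(H)) → C(Ω,B(H)) is linear and a derivation. -/
namespace W2L

section BH

variable {H : Type*} [NormedAddCommGroup H] [InnerProductSpace ℂ H]

/-- The rank one operator `z ↦ ⟪b, z⟫ a`. -/
noncomputable def rk (a b : H) : H →L[ℂ] H := (innerSL ℂ b).smulRight a

lemma rk_apply (a b z : H) : rk a b z = inner ℂ b z • a := by
  simp [rk]

/-- The vector functional `x ↦ ⟪b, x a⟫`. -/
noncomputable def vf (a b : H) : (H →L[ℂ] H) →L[ℂ] ℂ :=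
  (innerSL ℂ b).comp (ContinuousLinearMap.apply ℂ H a)

lemma vf_apply (a b : H) (x : H →L[ℂ] H) : vf a b x = inner ℂ b (x a) := by
  simp [vf]

lemma ext_vf {x y : H →L[ℂ] H} (h : ∀ a b : H, vf a b x = vf a b y) : x = y := by
  ext a
  refine ext_inner_left ℂ fun b => ?_
  simpa [vf_apply] using h a b

/-- Every derivation of `B(H)` is spatial. -/
lemma exists_spatial {D : (H →L[ℂ] H) → (H →L[ℂ] H)} (hD : IsCDerivation D) :
    ∃ T : H →ₗ[ℂ] H, ∀ (x : H →L[ℂ] H) (a : H), D x a = T (x a) - x (T a) := by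
  obtain ⟨hadd, hsmul, hmul⟩ := hD
  rcases subsingleton_or_nontrivial H with hs | hn
  · exact ⟨0, fun x a => Subsingleton.elim _ _⟩
  obtain ⟨u, hu⟩ := exists_norm_eq H zero_le_one
  have huu : inner ℂ u u = (1 : ℂ) := by
    rw [inner_self_eq_norm_sq_to_K, hu]; simp
  refine ⟨{ toFun := fun a => D (rk a u) u
            map_add' := fun a b => ?_
            map_smul' := fun c a => ?_ }, fun x a => ?_⟩
  · have : rk (a + b) u = rk a u + rk b u := by ext z; simp [rk_apply]
    rw [this, hadd]; rfl
  · have : rk (c • a) u = c • rk a u := by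
      ext z; simp [rk_apply, smul_comm c]
    rw [this, hsmul]; rfl
  · have : rk (x a) u = x * rk a u := by ext z; simp [rk_apply]
    have h2 := congrArg (fun y : H →L[ℂ] H => y u) (hmul x (rk a u))
    rw [← this] at h2
    simp only [rk_apply, huu, mul_apply_eq_comp, add_apply,
      one_smul] at h2
    simp [h2]

/-- Finite rank operators together with the associated trace functionals. -/
noncomputable def P (H : Type*) [NormedAddCommGroup H] [InnerProductSpace ℂ H] :
    Submodule ℂ ((H →L[ℂ] H) × ((H →L[ℂ] H) →L[ℂ] ℂ)) :=
  Submodule.span ℂ (Set.range fun q : H × H => (rk q.1 q.2, vf q.1 q.2))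

lemma rk_mem (a b : H) : (rk a b, vf a b) ∈ P H :=
  Submodule.subset_span ⟨(a, b), rfl⟩

lemma skew_D {D : (H →L[ℂ] H) → (H →L[ℂ] H)} (hD : IsCDerivation D)
    {p q : (H →L[ℂ] H) × ((H →L[ℂ] H) →L[ℂ] ℂ)} (hp : p ∈ P H) (hq : q ∈ P H) :
    p.2 (D q.1) + q.2 (D p.1) = 0 := by
  have hadd := hD.1
  have hsmul := hD.2.1
  have h0 : D 0 = 0 := by simpa using hsmul 0 0
  obtain ⟨T, hT⟩ := exists_spatial hD
  induction hp using Submodule.span_induction with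
  | mem p hp =>
    obtain ⟨⟨a, b⟩, rfl⟩ := hp
    induction hq using Submodule.span_induction with
    | mem q hq =>
      obtain ⟨⟨c, d⟩, rfl⟩ := hq
      simp only [vf_apply, hT, rk_apply, map_smul, inner_sub_right, inner_smul_right]
      ring
    | zero => simp [h0]
    | add x y _ _ hx hy =>
      simp only [Prod.fst_add, Prod.snd_add, hadd, map_add, add_apply] at *
      linear_combination hx + hy
    | smul c x _ hx =>
      simp only [Prod.smul_fst, Prod.smul_snd, hsmul, map_smul, smul_apply,
        smul_eq_mul] at *
      linear_combination c * hx
  | zero => simp [h0]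
  | add x y _ _ hx hy =>
    simp only [Prod.fst_add, Prod.snd_add, hadd, map_add, add_apply] at *
    linear_combination hx + hy
  | smul c x _ hx =>
    simp only [Prod.smul_fst, Prod.smul_snd, hsmul, map_smul, smul_apply,
      smul_eq_mul] at *
    linear_combination c * hx

variable {Δ : (H →L[ℂ] H) → (H →L[ℂ] H)}

lemma diag (hΔ : IsWeak2LocalDerivation Δ)
    {p : (H →L[ℂ] H) × ((H →L[ℂ] H) →L[ℂ] ℂ)} (hp : p ∈ P H) : p.2 (Δ p.1) = 0 := by
  obtain ⟨D, hD, h1, -⟩ := hΔ p.1 p.1 p.2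
  rw [h1]
  have := skew_D hD hp hp
  linear_combination this / 2

lemma skew (hΔ : IsWeak2LocalDerivation Δ)
    {p q : (H →L[ℂ] H) × ((H →L[ℂ] H) →L[ℂ] ℂ)} (hp : p ∈ P H) (hq : q ∈ P H) :
    p.2 (Δ q.1) + q.2 (Δ p.1) = 0 := by
  obtain ⟨D, hD, h1, h2⟩ := hΔ p.1 q.1 (p.2 + q.2)
  have a1 := diag hΔ hp
  have a2 := diag hΔ hq
  have a3 := skew_D hD hp hp
  have a4 := skew_D hD hq hq
  have a5 := skew_D hD hp hq
  simp only [add_apply] at h1 h2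
  linear_combination h1 + h2 - a1 - a2 + a3 / 2 + a4 / 2 + a5

/-- finite rank -/
def Fin0 (x : H →L[ℂ] H) : Prop := ∃ ψ, (x, ψ) ∈ P H

lemma Fin0.add {x y : H →L[ℂ] H} (hx : Fin0 x) (hy : Fin0 y) : Fin0 (x + y) := by
  obtain ⟨ψ, hψ⟩ := hx
  obtain ⟨χ, hχ⟩ := hy
  exact ⟨ψ + χ, (P H).add_mem hψ hχ⟩

lemma Fin0.smul {x : H →L[ℂ] H} (c : ℂ) (hx : Fin0 x) : Fin0 (c • x) := by
  obtain ⟨ψ, hψ⟩ := hx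
  exact ⟨c • ψ, (P H).smul_mem c hψ⟩

lemma Fin0.rk (a b : H) : Fin0 (rk a b) := ⟨_, rk_mem a b⟩

lemma add_fin (hΔ : IsWeak2LocalDerivation Δ) {x y : H →L[ℂ] H} (hx : Fin0 x) (hy : Fin0 y)
    (a b : H) : vf a b (Δ (x + y)) = vf a b (Δ x) + vf a b (Δ y) := by
  obtain ⟨ψ, hψ⟩ := hx
  obtain ⟨χ, hχ⟩ := hy
  have h1 := skew hΔ (rk_mem a b) hψ
  have h2 := skew hΔ (rk_mem a b) hχ
  have h3 := skew hΔ (rk_mem a b) ((P H).add_mem hψ hχ)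
  simp only [Prod.fst_add, Prod.snd_add, Prod.mk_add_mk, add_apply] at *
  linear_combination h3 - h1 - h2

/-- If `x - y` kills `a` and `b* (x - y) = 0` then `Δ x`, `Δ y` agree at `vf a b`. -/
lemma congr_vf (hΔ : IsWeak2LocalDerivation Δ) {x y : H →L[ℂ] H} {a b : H}
    (h1 : x a = y a) (h2 : ∀ z, inner ℂ b (x z) = inner ℂ b (y z)) :
    vf a b (Δ x) = vf a b (Δ y) := by
  obtain ⟨D, hD, e1, e2⟩ := hΔ x y (vf a b)
  obtain ⟨T, hT⟩ := exists_spatial hD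
  rw [e1, e2]
  simp only [vf_apply, hT, inner_sub_right, h1, h2]

/-- normalised projection onto the line through `a`. -/
noncomputable def pr (a : H) : H →L[ℂ] H := (inner ℂ a a : ℂ)⁻¹ • rk a a

lemma pr_self (a : H) : pr a a = a := by
  rcases eq_or_ne a 0 with rfl | h
  · simp
  · have : (inner ℂ a a : ℂ) ≠ 0 := inner_self_ne_zero.2 h
    simp only [pr, rk_apply, smul_smul, smul_apply]
    rw [inv_mul_cancel₀ this, one_smul]

lemma inner_pr (a z : H) : inner ℂ a (pr a z) = inner ℂ a z := by
  rcases eq_or_ne a 0 with rfl | h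
  · simp
  · have : (inner ℂ a a : ℂ) ≠ 0 := inner_self_ne_zero.2 h
    simp only [pr, rk_apply, smul_apply, inner_smul_right]
    field_simp

/-- finite rank replacement -/
noncomputable def cut (a b : H) (x : H →L[ℂ] H) : H →L[ℂ] H :=
  x * pr a + pr b * x - pr b * x * pr a

variable [CompleteSpace H]

lemma mul_rk (x : H →L[ℂ] H) (a b : H) : x * rk a b = rk (x a) b := by
  ext z; simp [rk_apply]

lemma rk_mul (x : H →L[ℂ] H) (a b : H) :
    rk a b * x = rk a (ContinuousLinearMap.adjoint x b) := by
  ext z; simp [rk_apply, ContinuousLinearMap.adjoint_inner_left]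

lemma fin_cut (a b : H) (x : H →L[ℂ] H) : Fin0 (cut a b x) := by
  have e : cut a b x = (x * pr a + pr b * x) + (-1 : ℂ) • (pr b * x * pr a) := by
    simp [cut, sub_eq_add_neg]
  rw [e]
  refine ((Fin0.add ?_ ?_).add (Fin0.smul _ ?_))
  · rw [pr, mul_smul_comm, mul_rk]; exact Fin0.smul _ (Fin0.rk _ _)
  · rw [pr, smul_mul_assoc, rk_mul]; exact Fin0.smul _ (Fin0.rk _ _)
  · rw [show pr a = (inner ℂ a a : ℂ)⁻¹ • rk a a from rfl, mul_smul_comm, mul_rk]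
    exact Fin0.smul _ (Fin0.rk _ _)

lemma vf_cut (hΔ : IsWeak2LocalDerivation Δ) (a b : H) (x : H →L[ℂ] H) :
    vf a b (Δ x) = vf a b (Δ (cut a b x)) := by
  apply congr_vf hΔ
  · simp [cut, pr_self]
  · intro z
    simp [cut, inner_pr, inner_add_right, inner_sub_right]

lemma add_all (hΔ : IsWeak2LocalDerivation Δ) (x y : H →L[ℂ] H) :
    Δ (x + y) = Δ x + Δ y := by
  apply ext_vf
  intro a b
  have : cut a b (x + y) = cut a b x + cut a b y := by
    simp only [cut]; noncomm_ring
  rw [map_add, vf_cut hΔ, vf_cut hΔ a b x, vf_cut hΔ a b y, this]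
  exact add_fin hΔ (fin_cut _ _ _) (fin_cut _ _ _) a b

lemma smul_all (hΔ : IsWeak2LocalDerivation Δ) (c : ℂ) (x : H →L[ℂ] H) :
    Δ (c • x) = c • Δ x := by
  apply ext_vf
  intro a b
  obtain ⟨D, hD, e1, e2⟩ := hΔ x (c • x) (vf a b)
  rw [e2, map_smul, e1, hD.2.1, map_smul]

lemma one_all (hΔ : IsWeak2LocalDerivation Δ) : Δ 1 = 0 := by
  apply ext_vf
  intro a b
  obtain ⟨D, hD, e1, e2⟩ := hΔ 1 1 (vf a b)
  have := hD.2.2 1 1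
  simp at this
  rw [e2, this]

lemma zero_all (hΔ : IsWeak2LocalDerivation Δ) : Δ 0 = 0 := by
  simpa using smul_all hΔ 0 0

lemma sub_all (hΔ : IsWeak2LocalDerivation Δ) (x y : H →L[ℂ] H) :
    Δ (x - y) = Δ x - Δ y := by
  have := add_all hΔ (x - y) y
  rw [sub_add_cancel] at this
  rw [this]; simp

lemma corner (hΔ : IsWeak2LocalDerivation Δ) (e f g k x : H →L[ℂ] H)
    (he : g * e = 0) (hf : f * k = 0) : g * Δ (e * x * f) * k = 0 := by
  apply ext_vf
  intro a b
  have h : vf (k a) (ContinuousLinearMap.adjoint g b) (Δ (e * x * f)) =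
      vf (k a) (ContinuousLinearMap.adjoint g b) (Δ 0) := by
    apply congr_vf hΔ
    · have := congrArg (fun y : H →L[ℂ] H => y a) hf
      simp at this
      simp [this]
    · intro z
      have := congrArg (fun y : H →L[ℂ] H => y (x (f z))) he
      simp at this
      simp [ContinuousLinearMap.adjoint_inner_left, this]
  rw [zero_all hΔ] at h
  simpa [vf_apply, ContinuousLinearMap.adjoint_inner_left] using h

lemma idem (hΔ : IsWeak2LocalDerivation Δ) (e f x : H →L[ℂ] H)
    (he : e * e = e) (hf : f * f = f) :
    Δ (e * x * f) + e * Δ x * f = Δ (e * x) * f + e * Δ (x * f) := by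
  have he1 : (1 - e) * e = 0 := by rw [sub_mul, he]; simp
  have he2 : e * (1 - e) = 0 := by rw [mul_sub, he]; simp
  have hf1 : (1 - f) * f = 0 := by rw [sub_mul, hf]; simp
  have hf2 : f * (1 - f) = 0 := by rw [mul_sub, hf]; simp
  have c1 := corner hΔ e f (1 - e) (1 - f) x he1 hf2
  have c2 := corner hΔ (1 - e) f e (1 - f) x he2 hf2
  have c3 := corner hΔ e (1 - f) (1 - e) f x he1 hf1
  have c4 := corner hΔ (1 - e) (1 - f) e f x he2 hf1
  simp only [sub_mul, mul_sub, one_mul, mul_one, sub_all hΔ] at c1 c2 c3 c4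
  linear_combination (norm := abel) c1 - c2 - c3 + c4

/-- `e` behaves well on the left. -/
def Good (Δ : (H →L[ℂ] H) → (H →L[ℂ] H)) (e f : H →L[ℂ] H) : Prop :=
  ∀ x, Δ (e * x * f) + e * Δ x * f = Δ (e * x) * f + e * Δ (x * f)

lemma rk_span (p : (H →L[ℂ] H) → Prop) (hidem : ∀ e, e * e = e → p e)
    (hs : ∀ (c : ℂ) x, p x → p (c • x)) (hsub : ∀ x y, p x → p y → p (x - y))
    (a b : H) : p (rk a b) := by
  have key : ∀ a b : H, (inner ℂ b a : ℂ) ≠ 0 → p (rk a b) := by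
    intro a b h
    have : rk a b = (inner ℂ b a : ℂ) • ((inner ℂ b a : ℂ)⁻¹ • rk a b) := by
      rw [smul_smul, mul_inv_cancel₀ h, one_smul]
    rw [this]
    apply hs
    apply hidem
    rw [mul_smul_comm, smul_mul_assoc, mul_rk, rk_apply]
    ext z
    simp [rk_apply, smul_smul]
    congr 1
    field_simp
  by_cases h : (inner ℂ b a : ℂ) = 0
  · by_cases ha : a = 0
    · have h0 : p 0 := hidem 0 (by simp)
      have : rk a b = 0 := by ext z; simp [rk_apply, ha]
      rwa [this]
    · have haa : (inner ℂ a a : ℂ) ≠ 0 := inner_self_ne_zero.2 ha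
      have : rk a b = rk a (b + a) - rk a a := by
        ext z; simp [rk_apply, inner_add_left, add_smul]
      rw [this]
      exact hsub _ _ (key _ _ (by rwa [inner_add_left, h, zero_add])) (key _ _ haa)
  · exact key a b h

lemma good_rk (hΔ : IsWeak2LocalDerivation Δ) (a b c d : H) :
    Good Δ (rk a b) (rk c d) := by
  refine rk_span (fun e => Good Δ e (rk c d)) ?_ ?_ ?_ a b
  · intro e he
    refine rk_span (fun f => Good Δ e f) ?_ ?_ ?_ c d
    · intro f hf x
      exact idem hΔ e f x he hf
    · intro k f h x
      have := h x
      simp only [mul_smul_comm, smul_all hΔ, ← smul_add, this]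
    · intro f g h1 h2 x
      have h1 := h1 x
      have h2 := h2 x
      simp only [mul_sub, sub_all hΔ]
      linear_combination (norm := abel) h1 - h2
  · intro k f h x
    have := h x
    simp only [smul_mul_assoc, smul_all hΔ, ← smul_add, this]
  · intro f g h1 h2 x
    have h1 := h1 x
    have h2 := h2 x
    simp only [sub_mul, sub_all hΔ]
    linear_combination (norm := abel) h1 - h2

lemma leib_rk (hΔ : IsWeak2LocalDerivation Δ) (a b c d : H) :
    Δ (rk a b * rk c d) = Δ (rk a b) * rk c d + rk a b * Δ (rk c d) := by
  have := good_rk hΔ a b c d 1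
  simpa [one_all hΔ] using this

lemma leib_right (hΔ : IsWeak2LocalDerivation Δ) (x : H →L[ℂ] H) (c d : H) :
    Δ (x * rk c d) = Δ x * rk c d + x * Δ (rk c d) := by
  have key : ∀ b : H, rk b b * Δ (x * rk c d) = rk b b * (Δ x * rk c d + x * Δ (rk c d)) := by
    intro b
    have h1 := good_rk hΔ b b c d x
    have h2 := leib_rk hΔ b (ContinuousLinearMap.adjoint x b) c d
    rw [← rk_mul] at h2
    rw [mul_add, ← mul_assoc, ← mul_assoc]
    linear_combination (norm := abel) h2 - h1
  ext z
  refine ext_inner_left ℂ fun b => ?_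
  rcases eq_or_ne b 0 with rfl | hb
  · simp
  have := congrArg (fun y : H →L[ℂ] H => y z) (key b)
  simp only [mul_apply_eq_comp, rk_apply] at this
  exact smul_left_injective ℂ hb this

lemma leib (hΔ : IsWeak2LocalDerivation Δ) (x y : H →L[ℂ] H) :
    Δ (x * y) = Δ x * y + x * Δ y := by
  have key : ∀ c : H, Δ (x * y) * rk c c = (Δ x * y + x * Δ y) * rk c c := by
    intro c
    have h1 := leib_right hΔ (x * y) c c
    have h2 := leib_right hΔ x (y c) c
    have h3 := leib_right hΔ y c c
    rw [← mul_rk, ← mul_assoc, h1, h3] at h2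
    simp only [mul_add, add_mul, mul_assoc] at *
    linear_combination (norm := abel) h2
  ext z
  rcases eq_or_ne z 0 with rfl | hz
  · simp
  have := congrArg (fun y : H →L[ℂ] H => y z) (key z)
  simp only [mul_apply_eq_comp, rk_apply, map_smul] at this
  exact smul_right_injective H (inner_self_ne_zero.2 hz : (inner ℂ z z : ℂ) ≠ 0) this

theorem main_BH (hΔ : IsWeak2LocalDerivation Δ) : IsCDerivation Δ :=
  ⟨add_all hΔ, smul_all hΔ, leib hΔ⟩

end BH

section COmega

variable {Ω A : Type*} [TopologicalSpace Ω] [CompactSpace Ω]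
  [NormedRing A] [NormedAlgebra ℂ A]

lemma exists_factor (f : C(Ω, A)) (t : Ω) (hf : f t = 0) :
    ∃ u h : C(Ω, A), f = u * h ∧ u t = 0 ∧ h t = 0 := by
  have hr : Continuous fun s => Real.sqrt ‖f s‖ := by fun_prop
  have hc : Continuous fun s => ((Real.sqrt ‖f s‖ : ℝ) : ℂ) := Complex.continuous_ofReal.comp hr
  refine ⟨⟨fun s => ((Real.sqrt ‖f s‖ : ℝ) : ℂ) • (1 : A), by fun_prop⟩,
    ⟨fun s => ((Real.sqrt ‖f s‖ : ℝ) : ℂ)⁻¹ • f s, ?_⟩, ?_, ?_, ?_⟩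
  · rw [continuous_iff_continuousAt]
    intro s
    by_cases hs : f s = 0
    · have h0 : ((Real.sqrt ‖f s‖ : ℝ) : ℂ)⁻¹ • f s = 0 := by simp [hs]
      unfold ContinuousAt
      beta_reduce
      rw [h0]
      apply squeeze_zero_norm (a := fun s => Real.sqrt ‖f s‖)
      · intro s'
        rw [norm_smul, norm_inv, Complex.norm_real, Real.norm_of_nonneg (Real.sqrt_nonneg _)]
        rw [inv_mul_eq_div, Real.div_sqrt]
      · have := hr.tendsto s
        simpa [hs] using this
    · apply ContinuousAt.smul
      · apply ContinuousAt.inv₀ hc.continuousAt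
        simpa using hs
      · exact f.continuous.continuousAt
  · ext s
    by_cases hs : f s = 0
    · simp [hs]
    · have : ((Real.sqrt ‖f s‖ : ℝ) : ℂ) ≠ 0 := by simpa using hs
      simp only [ContinuousMap.mul_apply, ContinuousMap.coe_mk, smul_mul_assoc, one_mul]
      rw [smul_smul, mul_inv_cancel₀ this, one_smul]
  · simp [hf]
  · simp [hf]

lemma local_D {D : C(Ω, A) → C(Ω, A)} (hD : IsCDerivation D) {f g : C(Ω, A)} {t : Ω}
    (h : f t = g t) : D f t = D g t := by
  obtain ⟨u, k, e, hu, hk⟩ := exists_factor (f - g) t (by simp [h])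
  have h1 : D f = D (f - g) + D g := by rw [← hD.1, sub_add_cancel]
  rw [h1, e, hD.2.2]
  simp [hu, hk]

end COmega

end W2L

open W2L in
theorem stmt2 {Ω H : Type*} [TopologicalSpace Ω] [CompactSpace Ω] [T2Space Ω]
    [NormedAddCommGroup H] [InnerProductSpace ℂ H] [CompleteSpace H]
    (Δ : C(Ω, H →L[ℂ] H) → C(Ω, H →L[ℂ] H)) (hΔ : IsWeak2LocalDerivation Δ) :
    IsCDerivation Δ := by
  have hpt : ∀ (t : Ω) (x y : C(Ω, H →L[ℂ] H)) (φ : (H →L[ℂ] H) →L[ℂ] ℂ),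
      ∃ D : C(Ω, H →L[ℂ] H) → C(Ω, H →L[ℂ] H), IsCDerivation D ∧
        φ (Δ x t) = φ (D x t) ∧ φ (Δ y t) = φ (D y t) := by
    intro t x y φ
    exact hΔ x y (φ.comp (ContinuousMap.evalCLM ℂ t))
  have hloc : ∀ (t : Ω) (x y : C(Ω, H →L[ℂ] H)), x t = y t → Δ x t = Δ y t := by
    intro t x y h
    apply ext_vf
    intro a b
    obtain ⟨D, hD, e1, e2⟩ := hpt t x y (vf a b)
    rw [e1, e2, local_D hD h]
  have hder : ∀ t : Ω, IsCDerivation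
      (fun a : H →L[ℂ] H => Δ (ContinuousMap.const Ω a) t) := by
    intro t
    apply main_BH
    intro x y φ
    obtain ⟨D, hD, e1, e2⟩ := hpt t (ContinuousMap.const Ω x) (ContinuousMap.const Ω y) φ
    refine ⟨fun a => D (ContinuousMap.const Ω a) t, ⟨?_, ?_, ?_⟩, e1, e2⟩
    · intro a b
      exact congrArg (fun f : C(Ω, H →L[ℂ] H) => f t)
        (hD.1 (ContinuousMap.const Ω a) (ContinuousMap.const Ω b))
    · intro c a
      exact congrArg (fun f : C(Ω, H →L[ℂ] H) => f t) (hD.2.1 c (ContinuousMap.const Ω a))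
    · intro a b
      exact congrArg (fun f : C(Ω, H →L[ℂ] H) => f t)
        (hD.2.2 (ContinuousMap.const Ω a) (ContinuousMap.const Ω b))
  have hc : ∀ (t : Ω) (x : C(Ω, H →L[ℂ] H)), Δ x t = Δ (ContinuousMap.const Ω (x t)) t :=
    fun t x => hloc t _ _ rfl
  refine ⟨fun x y => ?_, fun c x => ?_, fun x y => ?_⟩
  · refine ContinuousMap.ext fun t => ?_
    rw [ContinuousMap.add_apply, hc t (x + y), hc t x, hc t y]
    exact (hder t).1 (x t) (y t)
  · refine ContinuousMap.ext fun t => ?_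
    rw [ContinuousMap.smul_apply, hc t (c • x), hc t x]
    exact (hder t).2.1 c (x t)
  · refine ContinuousMap.ext fun t => ?_
    rw [ContinuousMap.add_apply, ContinuousMap.mul_apply, ContinuousMap.mul_apply,
      hc t (x * y), hc t x, hc t y]
    exact (hder t).2.2 (x t) (y t)
end

section
/- Let Ω be a compact Hausdorff space and let H be a complex Hilbert space. Then every 2-local derivation Δ : C(Ω,B(H)) → C(Ω,B(H)) is linear and a derivation. -/
def Is2LocalDerivation {B : Type*} [NonUnitalNormedRing B] [NormedSpace ℂ B]
    (Δ : B → B) : Prop :=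
  ∀ x y : B, ∃ D : B → B, IsCDerivation D ∧ Δ x = D x ∧ Δ y = D y

/-- A function vanishing at `t` factors as (scalar vanishing at `t`) * (function vanishing at `t`). -/
lemma factor_vanish {Ω H : Type*} [TopologicalSpace Ω]
    [NormedAddCommGroup H] [InnerProductSpace ℂ H]
    (a : C(Ω, H →L[ℂ] H)) (t : Ω) (ha : a t = 0) :
    ∃ f b : C(Ω, H →L[ℂ] H), a = f * b ∧ f t = 0 ∧ b t = 0 := by
  have hc : Continuous fun s => Real.sqrt ‖a s‖ := by fun_prop
  have hb : Continuous fun s => (((Real.sqrt ‖a s‖)⁻¹ : ℝ) : ℂ) • a s := by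
    rw [continuous_iff_continuousAt]
    intro s
    by_cases h : a s = 0
    · unfold ContinuousAt
      beta_reduce
      rw [h, smul_zero, tendsto_zero_iff_norm_tendsto_zero]
      have h1 : Filter.Tendsto (fun s => Real.sqrt ‖a s‖) (nhds s) (nhds 0) := by
        have := hc.tendsto s
        simpa [h] using this
      refine h1.congr fun r => ?_
      rw [norm_smul, Complex.norm_real, norm_inv, Real.norm_of_nonneg (Real.sqrt_nonneg _)]
      by_cases hr : ‖a r‖ = 0
      · simp [hr]
      · have h2 : Real.sqrt ‖a r‖ ≠ 0 := by
          rw [Ne, Real.sqrt_eq_zero (norm_nonneg _)]; exact hr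
        field_simp
        exact Real.sq_sqrt (norm_nonneg _)
    · have h2 : Real.sqrt ‖a s‖ ≠ 0 := by
        rw [Ne, Real.sqrt_eq_zero (norm_nonneg _)]; exact norm_ne_zero_iff.2 h
      exact (Complex.continuous_ofReal.continuousAt.comp (hc.continuousAt.inv₀ h2)).smul
        a.continuous.continuousAt
  refine ⟨⟨fun s => ((Real.sqrt ‖a s‖ : ℝ) : ℂ) • (1 : H →L[ℂ] H), by fun_prop⟩, ⟨_, hb⟩, ?_, ?_, ?_⟩
  · ext1 s
    simp only [ContinuousMap.mul_apply, ContinuousMap.coe_mk, smul_mul_assoc, one_mul, smul_smul]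
    by_cases h : a s = 0
    · simp [h]
    · have h2 : Real.sqrt ‖a s‖ ≠ 0 := by
        rw [Ne, Real.sqrt_eq_zero (norm_nonneg _)]; exact norm_ne_zero_iff.2 h
      rw [← Complex.ofReal_mul, mul_inv_cancel₀ h2]; simp
  · simp [ha]
  · simp [ha]

section jordan

/-- Herstein's identity for Jordan derivations. -/
lemma herstein {R : Type*} [Ring R] (h2 : ∀ x : R, x + x = 0 → x = 0) (δ : R → R)
    (hadd : ∀ x y, δ (x + y) = δ x + δ y)
    (hsq : ∀ x, δ (x * x) = δ x * x + x * δ x) (x y z : R) :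
    (δ (x * y) - δ x * y - x * δ y) * z * (x * y - y * x) +
      (x * y - y * x) * z * (δ (x * y) - δ x * y - x * δ y) = 0 := by
  have hJ : ∀ x y, δ (x * y) + δ (y * x) = δ x * y + x * δ y + δ y * x + y * δ x := by
    intro x y
    have h := hsq (x + y)
    have e : (x + y) * (x + y) = x * x + (x * y + (y * x + y * y)) := by noncomm_ring
    rw [e, hadd, hadd, hadd, hsq, hsq, hadd] at h
    have := sub_eq_zero.2 h
    rw [← sub_eq_zero, ← this]
    noncomm_ring
  have hT : ∀ x y, δ (x * y * x) = δ x * y * x + x * δ y * x + x * y * δ x := by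
    intro x y
    have h1 := hJ x (x * y)
    have h2' := hJ x (y * x)
    have h3 := hJ x y
    have h4 := hJ (x * x) y
    rw [hsq] at h4
    have e1 : x * (x * y) = x * x * y := by noncomm_ring
    have e2 : y * x * x = y * (x * x) := by noncomm_ring
    have e3 : x * (y * x) = x * y * x := by noncomm_ring
    rw [e1] at h1
    rw [e2, e3] at h2'
    have h5 : δ (y * x) = δ x * y + x * δ y + δ y * x + y * δ x - δ (x * y) := by
      rw [← h3]; abel
    have h6 : δ (y * (x * x)) = (δ x * x + x * δ x) * y + x * x * δ y + δ y * (x * x) +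
        y * (δ x * x + x * δ x) - δ (x * x * y) := by rw [← h4]; abel
    have h7 : δ (x * x * y) = δ x * (x * y) + x * δ (x * y) + δ (x * y) * x + x * y * δ x
      - δ (x * y * x) := by rw [← h1]; abel
    rw [h6, h7, h5] at h2'
    rw [← sub_eq_zero]
    apply h2
    have := sub_eq_zero.2 h2'
    rw [← this]
    noncomm_ring
  have hL : ∀ x y z, δ (x * y * z) + δ (z * y * x) = δ x * y * z + x * δ y * z + x * y * δ z
      + δ z * y * x + z * δ y * x + z * y * δ x := by
    intro x y z
    have h := hT (x + z) y
    have e : (x + z) * y * (x + z) = x * y * x + (x * y * z + (z * y * x + z * y * z)) := by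
      noncomm_ring
    rw [e, hadd, hadd, hadd, hT, hT, hadd] at h
    have := sub_eq_zero.2 h
    rw [← sub_eq_zero, ← this]
    noncomm_ring
  have h1 := hT x (y * z * y)
  have h2' := hT y (x * z * x)
  have h3 := hL (x * y) z (y * x)
  rw [hT y z] at h1
  rw [hT x z] at h2'
  have e1 : x * y * z * (y * x) = x * (y * z * y) * x := by noncomm_ring
  have e2 : y * x * z * (x * y) = y * (x * z * x) * y := by noncomm_ring
  rw [e1, e2, h1, h2'] at h3
  have h5 : δ (y * x) = δ x * y + x * δ y + δ y * x + y * δ x - δ (x * y) := by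
    rw [← hJ x y]; abel
  rw [h5] at h3
  have := sub_eq_zero.2 h3
  rw [← this]
  noncomm_ring

end jordan

section BH

variable {H : Type*} [NormedAddCommGroup H] [InnerProductSpace ℂ H]

lemma prime_BH (a b : H →L[ℂ] H) (h : ∀ z : H →L[ℂ] H, a * z * b + b * z * a = 0) :
    a = 0 ∨ b = 0 := by
  by_cases hb : b = 0
  · exact Or.inr hb
  left
  obtain ⟨ζ, hζ⟩ : ∃ ζ, b ζ ≠ 0 := by
    by_contra! hh; exact hb (ContinuousLinearMap.ext hh)
  have hn : inner ℂ (b ζ) (b ζ) ≠ 0 := inner_self_ne_zero.2 hζ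
  have key : ∀ ξ η : H, inner ℂ (b ζ) (b η) • a ξ + inner ℂ (b ζ) (a η) • b ξ = 0 := by
    intro ξ η
    have := congrArg (fun T : H →L[ℂ] H => T η)
      (h ((innerSL ℂ (b ζ)).smulRight ξ))
    simpa using this
  have h0 : inner ℂ (b ζ) (a ζ) = 0 := by
    have := congrArg (fun v => inner ℂ (b ζ) v) (key ζ ζ)
    simp only [inner_add_right, inner_smul_right, inner_zero_right] at this
    have h3 : inner ℂ (b ζ) (b ζ) * (2 * inner ℂ (b ζ) (a ζ)) = 0 := by
      rw [← this]; ring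
    simpa [hζ] using h3
  ext ξ
  have := key ξ ζ
  rw [h0, zero_smul, add_zero] at this
  simpa [hζ] using this

lemma jordan_BH (δ : (H →L[ℂ] H) → (H →L[ℂ] H))
    (hadd : ∀ x y, δ (x + y) = δ x + δ y) (hsmul : ∀ (c : ℂ) x, δ (c • x) = c • δ x)
    (hsq : ∀ x, δ (x * x) = δ x * x + x * δ x) (x y : H →L[ℂ] H) :
    δ (x * y) = δ x * y + x * δ y := by
  have h2 : ∀ x : H →L[ℂ] H, x + x = 0 → x = 0 := by
    intro x hx
    rw [← two_smul ℂ] at hx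
    simpa using hx
  have hor : ∀ x y, δ (x * y) - δ x * y - x * δ y = 0 ∨ x * y - y * x = 0 := fun x y =>
    prime_BH _ _ fun z => herstein h2 δ hadd hsq x y z
  have hx1 : ∀ x, (∃ w, x * w - w * x ≠ 0) → ∀ y, δ (x * y) - δ x * y - x * δ y = 0 := by
    rintro x ⟨w, hw⟩ y
    have hxw := (hor x w).resolve_right hw
    rcases hor x y with h | h
    · exact h
    · have h3 : x * (y + w) - (y + w) * x ≠ 0 := by
        have : x * (y + w) - (y + w) * x = (x * y - y * x) + (x * w - w * x) := by noncomm_ring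
        rw [this, h, zero_add]; exact hw
      have h4 := (hor x (y + w)).resolve_right h3
      rw [mul_add, hadd, hadd] at h4
      have : δ (x * y) - δ x * y - x * δ y =
        (δ (x * y) + δ (x * w) - δ x * (y + w) - x * (δ y + δ w))
          - (δ (x * w) - δ x * w - x * δ w) := by noncomm_ring
      rw [this, h4, hxw, sub_zero]
  rw [← sub_eq_zero, ← sub_sub]
  by_cases hc : ∃ w, x * w - w * x ≠ 0
  · exact hx1 x hc y
  push Not at hc
  by_cases hc2 : ∃ x' w : H →L[ℂ] H, x' * w - w * x' ≠ 0
  · obtain ⟨x', w, hw⟩ := hc2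
    have A := hx1 x' ⟨w, hw⟩ y
    have B := hx1 (x + x') ⟨w, by
      have : (x + x') * w - w * (x + x') = (x * w - w * x) + (x' * w - w * x') := by noncomm_ring
      rw [this, hc, zero_add]; exact hw⟩ y
    rw [add_mul, hadd, hadd] at B
    have : δ (x * y) - δ x * y - x * δ y =
        (δ (x * y) + δ (x' * y) - (δ x + δ x') * y - (x + x') * δ y)
          - (δ (x' * y) - δ x' * y - x' * δ y) := by noncomm_ring
    rw [this, A, B, sub_zero]
  · push Not at hc2
    have hcomm : ∀ p q : H →L[ℂ] H, p * q = q * p := fun p q => sub_eq_zero.1 (hc2 p q)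
    apply h2
    have h := hsq (x + y)
    have e : (x + y) * (x + y) = x * x + (x * y + (x * y + y * y)) := by
      rw [add_mul, mul_add, mul_add, hcomm y x]; abel
    rw [e, hadd, hadd, hadd, hsq, hsq, hadd] at h
    have := sub_eq_zero.2 h
    rw [← this, hcomm (x + y) (δ x + δ y), add_mul, mul_add, mul_add, hcomm x (δ y),
      hcomm x (δ x), hcomm y (δ y)]
    abel

/-- The compression identity: `⟨u, D x u⟩` is determined by `D (u ⊗ u)`. -/
lemma compress (u : H) (D : (H →L[ℂ] H) → (H →L[ℂ] H)) (hD : IsCDerivation D)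
    (e : H →L[ℂ] H) (he : e = (innerSL ℂ u).smulRight u) (x : H →L[ℂ] H) :
    (inner ℂ u u * inner ℂ u u) * inner ℂ u (D x u) =
      - (inner ℂ u u) * (inner ℂ u (D e (x u)) + inner ℂ u (x (D e u))) := by
  obtain ⟨_, hs, hm⟩ := hD
  have hee : ∀ z : H →L[ℂ] H, e * z * e = (inner ℂ u (z u) : ℂ) • e := by
    intro z; subst he; ext v; simp [smul_smul, mul_comm]
  have hu : ∀ w, e w = inner ℂ u w • u := by intro w; subst he; simp
  by_cases hu0 : u = 0
  · simp [hu0]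
  have hn : inner ℂ u u ≠ 0 := inner_self_ne_zero.2 hu0
  have h1 := hm e e
  have h1' : e * e = (inner ℂ u u : ℂ) • e := by simpa using hee 1
  rw [h1', hs] at h1
  have h0 : inner ℂ u (D e u) = 0 := by
    have := congrArg (fun T : H →L[ℂ] H => inner ℂ u (T u)) h1
    simp [hu, inner_smul_right] at this
    rcases this with h | h
    · exact h
    · exact absurd h hu0
  have h3 := hm (e * x) e
  rw [hee, hs, hm] at h3
  have := congrArg (fun T : H →L[ℂ] H => inner ℂ u (T u)) h3
  simp only [ContinuousLinearMap.smul_apply, ContinuousLinearMap.add_apply,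
    ContinuousLinearMap.mul_apply, hu, inner_smul_right, map_smul, inner_add_right, h0,
    mul_zero] at this
  linear_combination -this

lemma twoLocal_BH (Δ : (H →L[ℂ] H) → (H →L[ℂ] H)) (hΔ : Is2LocalDerivation Δ) :
    IsCDerivation Δ := by
  have key : ∀ (u : H) (x : H →L[ℂ] H), (inner ℂ u u * inner ℂ u u) * inner ℂ u (Δ x u) =
      - (inner ℂ u u) * (inner ℂ u (Δ ((innerSL ℂ u).smulRight u) (x u)) +
        inner ℂ u (x (Δ ((innerSL ℂ u).smulRight u) u))) := by
    intro u x
    obtain ⟨D, hD, h1, h2⟩ := hΔ x ((innerSL ℂ u).smulRight u)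
    rw [h1, h2]
    exact compress u D hD _ rfl x
  have hadd : ∀ x y, Δ (x + y) = Δ x + Δ y := by
    intro x y
    apply ContinuousLinearMap.coe_injective
    rw [← ext_inner_map]
    intro u
    by_cases hu0 : u = 0
    · simp [hu0]
    have hn : inner ℂ u u ≠ 0 := inner_self_ne_zero.2 hu0
    have := key u (x + y)
    have h : inner ℂ u (Δ (x + y) u) = inner ℂ u ((Δ x + Δ y) u) := by
      apply mul_left_cancel₀ (mul_ne_zero hn hn)
      rw [key]
      simp only [ContinuousLinearMap.add_apply, map_add, inner_add_right]
      linear_combination -key u x - key u y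
    have h' := congrArg (starRingEnd ℂ) h
    rwa [inner_conj_symm, inner_conj_symm] at h'
  have hsmul : ∀ (c : ℂ) x, Δ (c • x) = c • Δ x := by
    intro c x
    obtain ⟨D, hD, h1, h2⟩ := hΔ x (c • x)
    rw [h1, h2, hD.2.1]
  refine ⟨hadd, hsmul, jordan_BH Δ hadd hsmul fun x => ?_⟩
  obtain ⟨D, hD, h1, h2⟩ := hΔ x (x * x)
  rw [h1, h2, hD.2.2]

end BH

theorem stmt3 {Ω H : Type*} [TopologicalSpace Ω] [CompactSpace Ω] [T2Space Ω]
    [NormedAddCommGroup H] [InnerProductSpace ℂ H] [CompleteSpace H]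
    (Δ : C(Ω, H →L[ℂ] H) → C(Ω, H →L[ℂ] H)) (hΔ : Is2LocalDerivation Δ) :
    IsCDerivation Δ := by
  have hloc : ∀ (a : C(Ω, H →L[ℂ] H)) (t : Ω),
      Δ a t = Δ (ContinuousMap.const Ω (a t)) t := by
    intro a t
    obtain ⟨D, hD, h1, h2⟩ := hΔ a (ContinuousMap.const Ω (a t))
    obtain ⟨f, b, hfb, hf, hb⟩ := factor_vanish (a + (-1 : ℂ) • ContinuousMap.const Ω (a t)) t
      (by simp)
    have h3 := congrArg (fun g => (D g) t) hfb
    simp only [hD.1, hD.2.1, hD.2.2, ContinuousMap.add_apply, ContinuousMap.smul_apply,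
      ContinuousMap.mul_apply, hf, hb, mul_zero, zero_mul, add_zero] at h3
    rw [h1, h2, ← sub_eq_zero, ← h3]
    simp [sub_eq_add_neg]
  have hpt : ∀ t : Ω, IsCDerivation fun A : H →L[ℂ] H => Δ (ContinuousMap.const Ω A) t := by
    intro t
    apply twoLocal_BH
    intro A B
    obtain ⟨D, hD, h1, h2⟩ := hΔ (ContinuousMap.const Ω A) (ContinuousMap.const Ω B)
    refine ⟨fun A => D (ContinuousMap.const Ω A) t, ⟨fun x y => ?_, fun c x => ?_, fun x y => ?_⟩,
      by simp only [h1], by simp only [h2]⟩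
    · exact congrArg (fun g : C(Ω, H →L[ℂ] H) => g t)
        (hD.1 (ContinuousMap.const Ω x) (ContinuousMap.const Ω y))
    · exact congrArg (fun g : C(Ω, H →L[ℂ] H) => g t) (hD.2.1 c (ContinuousMap.const Ω x))
    · exact congrArg (fun g : C(Ω, H →L[ℂ] H) => g t)
        (hD.2.2 (ContinuousMap.const Ω x) (ContinuousMap.const Ω y))
  refine ⟨fun x y => ?_, fun c x => ?_, fun x y => ?_⟩
  · ext1 t
    rw [ContinuousMap.add_apply, hloc, hloc x, hloc y]
    exact (hpt t).1 _ _
  · ext1 t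
    rw [ContinuousMap.smul_apply, hloc, hloc x]
    exact (hpt t).2.1 _ _
  · ext1 t
    rw [ContinuousMap.add_apply, ContinuousMap.mul_apply, ContinuousMap.mul_apply, hloc, hloc x,
      hloc y]
    exact (hpt t).2.2 _ _
end

section
/- Let D : A → A be a derivation on a C*-algebra A. Then D(c) = 0 for every element c of the center Z(A) = {c ∈ A : ca = ac for all a ∈ A}. -/
theorem deriv_contMap_real {X : Type*} [TopologicalSpace X] (D : C(X, ℂ) → C(X, ℂ))
    (hadd : ∀ x y, D (x + y) = D x + D y) (hsmul : ∀ (c : ℂ) x, D (c • x) = c • D x)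
    (hmul : ∀ x y, D (x * y) = D x * y + x * D y) (u : X → ℝ) (hu : Continuous u)
    (f : C(X, ℂ)) (hf : ∀ x, f x = (u x : ℂ)) (x : X) : D f x = 0 := by
  have h1 : D 1 = 0 := by
    have h := hmul 1 1
    simpa using h
  have key : ∀ (s : ℝ) (g : C(X, ℂ)), (∀ y, g y = ((Real.sqrt (s * (u y - u x)) : ℝ) : ℂ)) →
      D (g * g) x = 0 := by
    intro s g hg
    have h0 : g x = 0 := by simp [hg]
    rw [hmul]
    simp [h0]
  let p : C(X, ℂ) := ⟨fun y => ((Real.sqrt (1 * (u y - u x)) : ℝ) : ℂ), by fun_prop⟩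
  let q : C(X, ℂ) := ⟨fun y => ((Real.sqrt (-1 * (u y - u x)) : ℝ) : ℂ), by fun_prop⟩
  have e : f = p * p + ((-1 : ℂ) • (q * q) + (u x : ℂ) • 1) := by
    ext y
    simp only [ContinuousMap.add_apply, ContinuousMap.mul_apply, ContinuousMap.smul_apply,
      ContinuousMap.one_apply, hf, p, q, ContinuousMap.coe_mk, smul_eq_mul]
    norm_cast
    rcases le_total 0 (u y - u x) with h | h
    · rw [Real.mul_self_sqrt (by linarith), Real.sqrt_eq_zero_of_nonpos (x := _ * _)]
      · push_cast; ring
      · push_cast; linarith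
    · rw [Real.sqrt_eq_zero_of_nonpos (x := 1 * _) (by linarith),
        Real.mul_self_sqrt (by push_cast; linarith)]
      push_cast; ring
  rw [e, hadd, hadd, hsmul, hsmul, h1]
  simp [key 1 p (fun _ => rfl), key (-1) q (fun _ => rfl)]

theorem deriv_contMap {X : Type*} [TopologicalSpace X] (D : C(X, ℂ) → C(X, ℂ))
    (hadd : ∀ x y, D (x + y) = D x + D y) (hsmul : ∀ (c : ℂ) x, D (c • x) = c • D x)
    (hmul : ∀ x y, D (x * y) = D x * y + x * D y) (f : C(X, ℂ)) : D f = 0 := by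
  ext x
  let a : C(X, ℂ) := ⟨fun y => (((f y).re : ℝ) : ℂ), by fun_prop⟩
  let b : C(X, ℂ) := ⟨fun y => (((f y).im : ℝ) : ℂ), by fun_prop⟩
  have e : f = a + Complex.I • b := by
    ext y
    simp [a, b, mul_comm Complex.I, Complex.re_add_im]
  rw [e, hadd, hsmul]
  have ha := deriv_contMap_real D hadd hsmul hmul (fun y => (f y).re) (by fun_prop) a
    (fun _ => rfl) x
  have hb := deriv_contMap_real D hadd hsmul hmul (fun y => (f y).im) (by fun_prop) b
    (fun _ => rfl) x
  simp [ha, hb]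

theorem deriv_commCStar {Z : Type*} [CommCStarAlgebra Z] (D : Z → Z)
    (hadd : ∀ x y, D (x + y) = D x + D y) (hsmul : ∀ (c : ℂ) x, D (c • x) = c • D x)
    (hmul : ∀ x y, D (x * y) = D x * y + x * D y) (z : Z) : D z = 0 := by
  let G := gelfandStarTransform Z
  have h := deriv_contMap (fun f => G (D (G.symm f)))
    (fun x y => by simp only [map_add, hadd])
    (fun c x => by simp only [map_smul, hsmul])
    (fun x y => by
      simp only [map_mul, hmul, map_add, StarAlgEquiv.apply_symm_apply]) (G z)
  simp only [StarAlgEquiv.symm_apply_apply] at h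
  exact EquivLike.injective G (h.trans (map_zero G).symm)

theorem stmt4 {A : Type*}
    [NormedRing A] [StarRing A] [CStarRing A] [NormedAlgebra ℂ A] [CompleteSpace A]
    [StarModule ℂ A]
    (D : A → A) (hD : IsCDerivation D) (c : A) (hc : ∀ a : A, c * a = a * c) :
    D c = 0 := by
  obtain ⟨hadd, hsmul, hmul⟩ := hD
  letI : CStarAlgebra A := {}
  let S := StarSubalgebra.centralizer ℂ (Set.univ : Set A)
  have hS : ∀ z, z ∈ S ↔ ∀ a, z * a = a * z := by
    intro z
    rw [StarSubalgebra.mem_centralizer_iff]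
    exact ⟨fun h a => (h a trivial).1.symm, fun h a _ => ⟨(h a).symm, (h _).symm⟩⟩
  haveI : IsClosed (S : Set A) := by
    rw [StarSubalgebra.coe_centralizer]
    exact Set.isClosed_centralizer _
  letI : CommCStarAlgebra S :=
    { StarSubalgebra.cstarAlgebra S with
      mul_comm := fun x y => Subtype.ext ((hS x).1 x.2 y) }
  have hDS : ∀ z ∈ S, D z ∈ S := by
    intro z hz
    rw [hS] at hz ⊢
    intro a
    have h := congrArg D (hz a)
    rw [hmul, hmul, hz (D a), add_comm] at h
    exact add_left_cancel h
  have h := deriv_commCStar (Z := S) (fun z => ⟨D z, hDS z z.2⟩)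
    (fun x y => Subtype.ext (hadd x y)) (fun c x => Subtype.ext (hsmul c x))
    (fun x y => Subtype.ext (hmul x y)) ⟨c, (hS c).2 hc⟩
  exact congrArg Subtype.val h
end

section
/- Let Ω be a compact Hausdorff space and let A be a C*-algebra satisfying: (a) every weak-2-local derivation on A is linear and a derivation; and (b) every derivation D : C(Ω,A) → C(Ω,A) satisfies D(X)(t) = D(â)(t) for every X ∈ C(Ω,A) and t ∈ Ω, where a = X(t) and â denotes the constant function with value a. Then every weak-2-local derivation on C(Ω,A) is linear and a derivation. -/
theorem stmt15 {Ω A : Type*} [TopologicalSpace Ω] [CompactSpace Ω] [T2Space Ω]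
    [NormedRing A] [StarRing A] [CStarRing A] [NormedAlgebra ℂ A] [CompleteSpace A]
    [StarModule ℂ A]
    (ha : ∀ Δ : A → A, IsWeak2LocalDerivation Δ → IsCDerivation Δ)
    (hb : ∀ D : C(Ω, A) → C(Ω, A), IsCDerivation D →
      ∀ (X : C(Ω, A)) (t : Ω), D X t = D (ContinuousMap.const Ω (X t)) t)
    (Δ : C(Ω, A) → C(Ω, A)) (hΔ : IsWeak2LocalDerivation Δ) :
    IsCDerivation Δ := by
  have key : ∀ (X : C(Ω, A)) (t : Ω), Δ X t = Δ (ContinuousMap.const Ω (X t)) t := by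
    intro X t
    by_contra hne
    obtain ⟨f, hf⟩ := SeparatingDual.exists_separating_of_ne (R := ℂ) hne
    obtain ⟨D, hD, h1, h2⟩ := hΔ X (ContinuousMap.const Ω (X t))
      (f.comp (ContinuousMap.evalCLM ℂ t))
    apply hf
    have h1' : f (Δ X t) = f (D X t) := h1
    have h2' : f (Δ (ContinuousMap.const Ω (X t)) t)
      = f (D (ContinuousMap.const Ω (X t)) t) := h2
    rw [h1', h2', hb D hD X t]
  have der : ∀ t : Ω, IsCDerivation (fun a : A => Δ (ContinuousMap.const Ω a) t) := by
    intro t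
    apply ha
    intro x y f
    obtain ⟨D, ⟨hD1, hD2, hD3⟩, h1, h2⟩ := hΔ (ContinuousMap.const Ω x)
      (ContinuousMap.const Ω y) (f.comp (ContinuousMap.evalCLM ℂ t))
    refine ⟨fun a => D (ContinuousMap.const Ω a) t, ⟨?_, ?_, ?_⟩, h1, h2⟩
    · intro a b
      exact congrArg (fun F : C(Ω, A) => F t)
        (hD1 (ContinuousMap.const Ω a) (ContinuousMap.const Ω b))
    · intro c a
      exact congrArg (fun F : C(Ω, A) => F t) (hD2 c (ContinuousMap.const Ω a))
    · intro a b
      exact congrArg (fun F : C(Ω, A) => F t)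
        (hD3 (ContinuousMap.const Ω a) (ContinuousMap.const Ω b))
  refine ⟨?_, ?_, ?_⟩
  · intro X Y
    ext t
    have h := (der t).1 (X t) (Y t)
    simp only [← key] at h
    rw [key, ContinuousMap.add_apply, ContinuousMap.add_apply, h]
  · intro c X
    ext t
    have h := (der t).2.1 c (X t)
    simp only [← key] at h
    rw [key, ContinuousMap.smul_apply, ContinuousMap.smul_apply, h]
  · intro X Y
    ext t
    have h := (der t).2.2 (X t) (Y t)
    simp only [← key] at h
    rw [key, ContinuousMap.mul_apply, ContinuousMap.add_apply, ContinuousMap.mul_apply,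
      ContinuousMap.mul_apply, h]
end

section
/- Let Ω be a compact Hausdorff space and let B be a C*-algebra satisfying: (a) every 2-local derivation on B is linear and a derivation; and (b) every derivation D : C(Ω,B) → C(Ω,B) satisfies D(X)(t) = D(â)(t) for every X ∈ C(Ω,B) and t ∈ Ω, where a = X(t) and â denotes the constant function with value a. Then every 2-local derivation on C(Ω,B) is linear and a derivation. -/
theorem stmt16 {Ω B : Type*} [TopologicalSpace Ω] [CompactSpace Ω] [T2Space Ω]
    [NormedRing B] [StarRing B] [CStarRing B] [NormedAlgebra ℂ B] [CompleteSpace B]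
    [StarModule ℂ B]
    (ha : ∀ Δ : B → B, Is2LocalDerivation Δ → IsCDerivation Δ)
    (hb : ∀ D : C(Ω, B) → C(Ω, B), IsCDerivation D →
      ∀ (X : C(Ω, B)) (t : Ω), D X t = D (ContinuousMap.const Ω (X t)) t)
    (Δ : C(Ω, B) → C(Ω, B)) (hΔ : Is2LocalDerivation Δ) :
    IsCDerivation Δ := by
  have hD : ∀ (t : Ω) (D : C(Ω, B) → C(Ω, B)), IsCDerivation D →
      IsCDerivation (fun a : B => D (ContinuousMap.const Ω a) t) := by
    rintro t D ⟨h1, h2, h3⟩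
    refine ⟨fun a b => ?_, fun c a => ?_, fun a b => ?_⟩
    · have : ContinuousMap.const Ω (a + b)
          = ContinuousMap.const Ω a + ContinuousMap.const Ω b := by ext; simp
      simp only [this, h1, ContinuousMap.add_apply]
    · have : ContinuousMap.const Ω (c • a) = c • ContinuousMap.const Ω a := by ext; simp
      simp only [this, h2, ContinuousMap.smul_apply]
    · have : ContinuousMap.const Ω (a * b)
          = ContinuousMap.const Ω a * ContinuousMap.const Ω b := by ext; simp
      simp only [this, h3, ContinuousMap.add_apply, ContinuousMap.mul_apply,
        ContinuousMap.const_apply]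
  have hΔt : ∀ t : Ω, IsCDerivation (fun a : B => Δ (ContinuousMap.const Ω a) t) := by
    intro t
    apply ha
    intro a b
    obtain ⟨D, hder, hx, hy⟩ := hΔ (ContinuousMap.const Ω a) (ContinuousMap.const Ω b)
    exact ⟨_, hD t D hder, by simp only [hx], by simp only [hy]⟩
  have key : ∀ (X : C(Ω, B)) (t : Ω), Δ X t = Δ (ContinuousMap.const Ω (X t)) t := by
    intro X t
    obtain ⟨D, hder, hx, hy⟩ := hΔ X (ContinuousMap.const Ω (X t))
    rw [hx, hy]
    exact hb D hder X t
  refine ⟨fun X Y => ?_, fun c X => ?_, fun X Y => ?_⟩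
  · ext t
    rw [ContinuousMap.add_apply, key (X + Y), key X, key Y]
    exact (hΔt t).1 (X t) (Y t)
  · ext t
    rw [ContinuousMap.smul_apply, key (c • X), key X]
    exact (hΔt t).2.1 c (X t)
  · ext t
    rw [ContinuousMap.add_apply, ContinuousMap.mul_apply, ContinuousMap.mul_apply,
      key (X * Y), key X, key Y]
    exact (hΔt t).2.2 (X t) (Y t)
end

section
/- Let H be a complex Hilbert space, let M be a von Neumann algebra acting on H, and let Ω be a compact Hausdorff space. Then every 2-local derivation Δ : C(Ω,M) → C(Ω,M) is linear and a derivation. -/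
set_option maxHeartbeats 1000000
set_option synthInstance.maxHeartbeats 1000000

instance {H : Type*} [NormedAddCommGroup H] [InnerProductSpace ℂ H] [CompleteSpace H] :
    SMulMemClass (VonNeumannAlgebra H) ℂ (H →L[ℂ] H) where
  smul_mem {M} c x hx := M.toSubalgebra.smul_mem hx c


namespace TwoLocal

section algebra

variable {A : Type*} [NormedRing A] [NormedAlgebra ℂ A]

lemma der_one {D : A → A} (hD : IsCDerivation D) : D 1 = 0 := by
  have h := hD.2.2 1 1
  simpa using h

lemma der_zero {D : A → A} (hD : IsCDerivation D) : D 0 = 0 := by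
  have h := hD.1 0 0
  simpa using h

lemma der_neg {D : A → A} (hD : IsCDerivation D) (x : A) : D (-x) = - D x := by
  have h := hD.1 x (-x)
  rw [add_neg_cancel, der_zero hD] at h
  exact (neg_eq_of_add_eq_zero_right h.symm).symm

lemma der_sub {D : A → A} (hD : IsCDerivation D) (x y : A) : D (x - y) = D x - D y := by
  rw [sub_eq_add_neg, hD.1, der_neg hD, sub_eq_add_neg]

lemma sub_two_local {Δ D₀ : A → A} (hΔ : Is2LocalDerivation Δ) (hD₀ : IsCDerivation D₀) :
    Is2LocalDerivation (fun x => Δ x - D₀ x) := by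
  intro x y
  obtain ⟨D, hD, hx, hy⟩ := hΔ x y
  refine ⟨fun z => D z - D₀ z, ⟨?_, ?_, ?_⟩, by simp [hx], by simp [hy]⟩
  · intro a b; simp only [hD.1, hD₀.1]; abel
  · intro c a; simp only [hD.2.1, hD₀.2.1, smul_sub]
  · intro a b; simp only [hD.2.2, hD₀.2.2]; noncomm_ring

/-- A derivation compressed by an idempotent kills it. -/
lemma der_idem {D : A → A} (hD : IsCDerivation D) {e : A} (he : e * e = e) :
    e * D e * e = 0 := by
  have h := hD.2.2 e e
  rw [he] at h
  have h2 : e * D e * e = e * (D e * e + e * D e) * e := by rw [← h]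
  have h3 : e * (D e * e + e * D e) * e = e * D e * e + e * D e * e := by
    have : e * (D e * e + e * D e) * e = e * D e * (e * e) + (e * e) * D e * e := by noncomm_ring
    rw [this, he]
  rw [h3] at h2
  simpa using h2

/-- If `w` commutes with `e`, and `D w` commutes with `e`, and everything commuting with `w`
commutes with `e`, then `D e = 0`. -/
lemma der_zero_of_comm {D : A → A} (hD : IsCDerivation D) {e w : A} (he : e * e = e)
    (hwe : w * e = e * w) (hDw : D w * e = e * D w)
    (hb : ∀ y, w * y = y * w → e * y = y * e) : D e = 0 := by
  have h1 : D (w * e) = D (e * w) := by rw [hwe]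
  rw [hD.2.2, hD.2.2, hDw] at h1
  have h2 : w * D e = D e * w := by
    have := h1
    rw [add_comm (D e * w)] at this
    exact add_left_cancel this
  have h3 := hb _ h2
  have h4 := hD.2.2 e e
  rw [he, ← h3] at h4
  have h5 : e * D e = 0 := by
    have : e * D e = e * (e * D e + e * D e) := by rw [← h4]
    rw [mul_add, ← mul_assoc, he] at this
    simpa using this
  rw [h4, h5, add_zero]

lemma comm_of_big {e a : A} {c : ℂ} (he : e * e = e) (hea : e * a = a) (hae : a * e = a)
    (hc : ‖a‖ < ‖c‖) (y : A)
    (hy : (a + c • (1 - e)) * y = y * (a + c • (1 - e))) : e * y = y * e := by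
  have e1 : e * (1 - e) = 0 := by rw [mul_sub, he, mul_one, sub_self]
  have e2 : (1 - e) * e = 0 := by rw [sub_mul, he, one_mul, sub_self]
  have e3 : (1 - e) * (1 - e) = 1 - e := by rw [mul_sub, e2, mul_one, sub_zero]
  have ha1 : a * (1 - e) = 0 := by rw [mul_sub, hae, mul_one, sub_self]
  have ha2 : (1 - e) * a = 0 := by rw [sub_mul, hea, one_mul, sub_self]
  have key : ∀ u : A, (a * u = c • u ∨ u * a = c • u) → u = 0 := by
    intro u hu
    by_contra hne
    have hpos : 0 < ‖u‖ := norm_pos_iff.mpr hne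
    have h1 : ‖c‖ * ‖u‖ ≤ ‖a‖ * ‖u‖ := by
      rcases hu with hu | hu
      · rw [← norm_smul, ← hu]; exact norm_mul_le _ _
      · rw [← norm_smul, ← hu, mul_comm]; exact norm_mul_le _ _
    nlinarith
  have u1 : e * y * (1 - e) = 0 := by
    apply key; left
    have : e * ((a + c • (1 - e)) * y) * (1 - e) = e * (y * (a + c • (1 - e))) * (1 - e) := by
      rw [hy]
    have l : e * ((a + c • (1 - e)) * y) * (1 - e) = a * (e * y * (1 - e)) := by
      have : e * ((a + c • (1 - e)) * y) * (1 - e) =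
        (e * a) * y * (1 - e) + c • ((e * (1 - e)) * y * (1 - e)) := by
        simp only [mul_add, add_mul, mul_assoc, smul_mul_assoc, mul_smul_comm]
      rw [this, e1, hea]
      have : a * (e * y * (1 - e)) = (a * e) * y * (1 - e) := by simp only [mul_assoc]
      rw [this, hae]; simp
    have r : e * (y * (a + c • (1 - e))) * (1 - e) = c • (e * y * (1 - e)) := by
      have : e * (y * (a + c • (1 - e))) * (1 - e) =
        e * y * (a * (1 - e)) + c • (e * y * ((1 - e) * (1 - e))) := by
        simp only [mul_add, add_mul, mul_assoc, smul_mul_assoc, mul_smul_comm]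
      rw [this, e3, ha1]; simp
    rw [← l, ← r, this]
  have u2 : (1 - e) * y * e = 0 := by
    apply key; right
    have : (1 - e) * ((a + c • (1 - e)) * y) * e = (1 - e) * (y * (a + c • (1 - e))) * e := by
      rw [hy]
    have l : (1 - e) * ((a + c • (1 - e)) * y) * e = c • ((1 - e) * y * e) := by
      have : (1 - e) * ((a + c • (1 - e)) * y) * e =
        ((1 - e) * a) * y * e + c • (((1 - e) * (1 - e)) * y * e) := by
        simp only [mul_add, add_mul, mul_assoc, smul_mul_assoc, mul_smul_comm]
      rw [this, e3, ha2]; simp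
    have r : (1 - e) * (y * (a + c • (1 - e))) * e = ((1 - e) * y * e) * a := by
      have : (1 - e) * (y * (a + c • (1 - e))) * e =
        (1 - e) * y * (a * e) + c • ((1 - e) * y * ((1 - e) * e)) := by
        simp only [mul_add, add_mul, mul_assoc, smul_mul_assoc, mul_smul_comm]
      rw [this, e2, hae]
      have : ((1 - e) * y * e) * a = (1 - e) * y * (e * a) := by simp only [mul_assoc]
      rw [this, hea]; simp
    rw [← l, ← r, this]
  rw [mul_sub, mul_one, sub_eq_zero] at u1
  rw [sub_mul, sub_mul, one_mul, sub_eq_zero] at u2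
  rw [u1, u2]

/-- For an idempotent killed by a 2-local derivation, compression commutes with it. -/
lemma compress {Δ : A → A} (hΔ : Is2LocalDerivation Δ) {e : A} (he : e * e = e)
    (h0 : Δ e = 0) (x : A) : e * Δ x * e = Δ (e * x * e) := by
  have exp : ∀ D : A → A, IsCDerivation D → D e = 0 → ∀ z, D (e * z * e) = e * D z * e := by
    intro D hD hDe z
    rw [hD.2.2, hD.2.2, hDe]; simp
  set a := e * x * e with ha
  have hea : e * a = a := by rw [ha, ← mul_assoc, ← mul_assoc, he]
  have hae : a * e = a := by rw [ha, mul_assoc, he]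
  set c : ℂ := ((‖a‖ + 1 : ℝ) : ℂ) with hc
  have hcn : ‖a‖ < ‖c‖ := by
    rw [hc, Complex.norm_real, Real.norm_of_nonneg (by positivity)]; linarith
  set w := a + c • (1 - e) with hw
  have Dw : ∀ D : A → A, IsCDerivation D → D w = D a - c • D e := by
    intro D hD
    rw [hw, hD.1, hD.2.1, der_sub hD, der_one hD, zero_sub, smul_neg, sub_eq_add_neg]
  -- Δ a ∈ eAe
  have s1 : e * Δ a * e = Δ a := by
    obtain ⟨D, hD, h1, h2⟩ := hΔ a e
    rw [h0] at h2
    rw [h1, ha, exp D hD h2.symm]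
    have : e * (e * D x * e) * e = (e * e) * D x * (e * e) := by simp only [mul_assoc]
    rw [this, he]
  have s2 : e * Δ w * e = Δ w := by
    obtain ⟨D, hD, h1, h2⟩ := hΔ w e
    rw [h0] at h2
    rw [h1, Dw D hD, ← h2, smul_zero, sub_zero, ha, exp D hD h2.symm]
    have : e * (e * D x * e) * e = (e * e) * D x * (e * e) := by simp only [mul_assoc]
    rw [this, he]
  have s3 : Δ w = Δ a := by
    obtain ⟨D, hD, h1, h2⟩ := hΔ w a
    rw [← s2, h1, Dw D hD, mul_sub, sub_mul, ← h2, s1]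
    have : e * c • D e * e = c • (e * D e * e) := by
      simp only [mul_assoc, smul_mul_assoc, mul_smul_comm]
    rw [this, der_idem hD he]; simp
  obtain ⟨D, hD, h1, h2⟩ := hΔ x w
  have hDe : D e = 0 := by
    apply der_zero_of_comm hD (w := w) he
    · simp only [hw, add_mul, mul_add, hea, hae, smul_mul_assoc, mul_smul_comm, sub_mul, mul_sub,
        one_mul, mul_one]
    · rw [← h2, ← s2, mul_assoc, mul_assoc, mul_assoc, he, ← mul_assoc e e, he]
    · intro y hy
      exact comm_of_big he hea hae hcn y hy
  rw [h1, ← exp D hD hDe, ← s3, h2, Dw D hD, hDe, smul_zero, sub_zero]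

lemma der_diag {D : A → A} (hD : IsCDerivation D) {e x : A} (he : e * e = e)
    (hx : e * x = x * e) : e * D x * e = e * D (e * x * e) * e := by
  rw [hD.2.2, hD.2.2]
  have h : e * ((D e * x + e * D x) * e + e * x * D e) * e =
    e * D e * (x * e) * e + (e * e) * D x * (e * e) + (e * e) * x * (D e * e) := by noncomm_ring
  have h1 : e * D e * (x * e) * e = 0 := by
    rw [← hx, ← mul_assoc, der_idem hD he]; simp
  have h2 : (e * e) * x * (D e * e) = 0 := by
    rw [he, hx, mul_assoc, ← mul_assoc e, der_idem hD he]; simp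
  rw [h, h1, h2, he]; simp

end algebra

end TwoLocal

namespace TwoLocal

section matrixunits

variable {A : Type*} [NormedRing A] [NormedAlgebra ℂ A]

lemma der_shift {D : A → A} (hD : IsCDerivation D) {p s t a : A} (hp : p * p = p)
    (hts : t * s = p) (hsp : s * p = s) (hpt : p * t = t) (h0 : p * D t * s = 0)
    (hpa : p * a = a) (hap : a * p = a) :
    t * D (s * a * t) * s = p * D a * p := by
  have h1 : t * D s * p = 0 := by
    have h := der_idem hD hp
    have h2 : D p = D t * s + t * D s := by rw [← hts, hD.2.2]
    rw [h2, mul_add, add_mul] at h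
    have h3 : p * (D t * s) * p = 0 := by
      rw [mul_assoc, mul_assoc, hsp, ← mul_assoc, h0]
    have h4 : p * (t * D s) * p = t * D s * p := by rw [← mul_assoc, hpt]
    rwa [h3, h4, zero_add] at h
  rw [hD.2.2, hD.2.2]
  have e : t * ((D s * a + s * D a) * t + s * a * D t) * s =
    t * D s * a * (t * s) + (t * s) * D a * (t * s) + (t * s) * a * (D t * s) := by noncomm_ring
  have e1 : t * D s * a * (t * s) = 0 := by
    rw [hts, mul_assoc (t * D s), hap]
    rw [← hpa, ← mul_assoc, h1, zero_mul]
  have e2 : (t * s) * a * (D t * s) = 0 := by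
    rw [hts, hpa]
    have : a * (D t * s) = a * (p * D t * s) := by
      rw [mul_assoc p, ← mul_assoc a p, hap]
    rw [this, h0, mul_zero]
  rw [e, e1, e2, hts]; simp

/-- A 2-local derivation compressed to a projection which has two further orthogonal copies
is additive. -/
lemma matrix_additive {Δ : A → A} (hΔ : Is2LocalDerivation Δ) {p s2 s3 t2 t3 : A}
    (hp : p * p = p) (h22 : t2 * s2 = p) (h33 : t3 * s3 = p) (h23 : t2 * s3 = 0)
    (h32 : t3 * s2 = 0) (hps2 : p * s2 = 0) (hps3 : p * s3 = 0) (ht2p : t2 * p = 0)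
    (ht3p : t3 * p = 0) (hs2p : s2 * p = s2) (hs3p : s3 * p = s3) (hpt2 : p * t2 = t2)
    (hpt3 : p * t3 = t3) (x y : A) :
    p * (Δ (x + y) - Δ x - Δ y) * p = 0 := by
  set w := t2 + s2 * t3 with hw
  -- normalisation
  wlog hN : Δ p = 0 ∧ Δ w = 0 generalizing Δ
  · obtain ⟨D₀, hD₀, h1, h2⟩ := hΔ p w
    have := this (sub_two_local hΔ hD₀) ⟨by simp [h1], by simp [h2]⟩
    simp only [hD₀.1] at this
    rw [← this]; noncomm_ring
  obtain ⟨hΔp, hΔw⟩ := hN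
  have hpw : p * w = t2 := by rw [hw, mul_add, hpt2, ← mul_assoc, hps2]; simp
  have hws2 : w * s2 = p := by rw [hw, add_mul, h22, mul_assoc, h32]; simp
  have hws3 : w * s3 = s2 := by rw [hw, add_mul, h23, mul_assoc, h33, hs2p]; simp
  have ht2w : t2 * w = t3 := by
    rw [hw, mul_add, ← mul_assoc, h22, hpt3]
    rw [← hpt2, ← mul_assoc, mul_assoc p t2 p, ht2p]; simp
  set Y : A → A → A → A := fun a b c => a + s2 * b * t2 + s3 * c * t3 with hY
  -- the i-th diagonal entry
  have diag1 : ∀ D : A → A, IsCDerivation D → ∀ a b c, p * a = a → a * p = a →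
      p * D (Y a b c) * p = p * D a * p := by
    intro D hD a b c hpa hap
    have c1 : p * Y a b c = a := by
      simp only [hY, mul_add, ← mul_assoc, hps2, hps3, hpa]; simp
    have c2 : Y a b c * p = a := by
      simp only [hY, add_mul, mul_assoc, ht2p, ht3p, hap]; simp
    rw [der_diag hD hp (by rw [c1, c2]), c1, hap]
  have diag2 : ∀ D : A → A, IsCDerivation D → ∀ a b c, p * a = a → a * p = a →
      p * b = b → b * p = b →
      t2 * D (Y a b c) * s2 = t2 * D (s2 * b * t2) * s2 := by
    intro D hD a b c hpa hap hpb hbp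
    have c1 : (s2 * t2) * Y a b c = s2 * b * t2 := by
      have e1 : s2 * t2 * a = 0 := by rw [← hpa, ← mul_assoc, mul_assoc s2, ht2p]; simp
      have e2 : s2 * t2 * (s2 * b * t2) = s2 * b * t2 := by
        rw [mul_assoc s2, ← mul_assoc t2, ← mul_assoc t2, h22, hpb, mul_assoc]
      have e3 : s2 * t2 * (s3 * c * t3) = 0 := by
        rw [mul_assoc s2, ← mul_assoc t2, ← mul_assoc t2, h23]; simp
      simp only [hY, mul_add, e1, e2, e3]; simp
    have c2 : Y a b c * (s2 * t2) = s2 * b * t2 := by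
      have e1 : a * (s2 * t2) = 0 := by rw [← hap, ← mul_assoc, mul_assoc a, hps2]; simp
      have e2 : (s2 * b * t2) * (s2 * t2) = s2 * b * t2 := by
        rw [mul_assoc _ t2, ← mul_assoc t2, h22, hpt2]
      have e3 : (s3 * c * t3) * (s2 * t2) = 0 := by
        rw [mul_assoc _ t3, ← mul_assoc t3, h32]; simp
      simp only [hY, add_mul, e1, e2, e3]; simp
    have ee : (s2 * t2) * (s2 * t2) = s2 * t2 := by
      rw [mul_assoc, ← mul_assoc t2, h22, hpt2]
    have h := der_diag hD ee (by rw [c1, c2] : (s2 * t2) * Y a b c = Y a b c * (s2 * t2))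
    have c3 : s2 * b * t2 * (s2 * t2) = s2 * b * t2 := by
        rw [mul_assoc _ t2, ← mul_assoc t2, h22, hpt2]
    rw [c1, c3] at h
    have q : ∀ z, t2 * (s2 * t2 * z * (s2 * t2)) * s2 = t2 * z * s2 := by
      intro z
      have : t2 * (s2 * t2 * z * (s2 * t2)) * s2 = (t2 * s2) * t2 * z * (s2 * (t2 * s2)) := by
        simp only [mul_assoc]
      rw [this, h22, hpt2, hs2p]
    rw [← q (D (Y a b c)), h, q]
  have diag3 : ∀ D : A → A, IsCDerivation D → ∀ a b c, p * a = a → a * p = a →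
      p * c = c → c * p = c →
      t3 * D (Y a b c) * s3 = t3 * D (s3 * c * t3) * s3 := by
    intro D hD a b c hpa hap hpb hbp
    have c1 : (s3 * t3) * Y a b c = s3 * c * t3 := by
      have e1 : s3 * t3 * a = 0 := by rw [← hpa, ← mul_assoc, mul_assoc s3, ht3p]; simp
      have e2 : s3 * t3 * (s3 * c * t3) = s3 * c * t3 := by
        rw [mul_assoc s3, ← mul_assoc t3, ← mul_assoc t3, h33, hpb, mul_assoc]
      have e3 : s3 * t3 * (s2 * b * t2) = 0 := by
        rw [mul_assoc s3, ← mul_assoc t3, ← mul_assoc t3, h32]; simp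
      simp only [hY, mul_add, e1, e2, e3]; simp
    have c2 : Y a b c * (s3 * t3) = s3 * c * t3 := by
      have e1 : a * (s3 * t3) = 0 := by rw [← hap, ← mul_assoc, mul_assoc a, hps3]; simp
      have e2 : (s3 * c * t3) * (s3 * t3) = s3 * c * t3 := by
        rw [mul_assoc _ t3, ← mul_assoc t3, h33, hpt3]
      have e3 : (s2 * b * t2) * (s3 * t3) = 0 := by
        rw [mul_assoc _ t2, ← mul_assoc t2, h23]; simp
      simp only [hY, add_mul, e1, e2, e3]; simp
    have ee : (s3 * t3) * (s3 * t3) = s3 * t3 := by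
      rw [mul_assoc, ← mul_assoc t3, h33, hpt3]
    have h := der_diag hD ee (by rw [c1, c2] : (s3 * t3) * Y a b c = Y a b c * (s3 * t3))
    have c3 : s3 * c * t3 * (s3 * t3) = s3 * c * t3 := by
        rw [mul_assoc _ t3, ← mul_assoc t3, h33, hpt3]
    rw [c1, c3] at h
    have q : ∀ z, t3 * (s3 * t3 * z * (s3 * t3)) * s3 = t3 * z * s3 := by
      intro z
      have : t3 * (s3 * t3 * z * (s3 * t3)) * s3 = (t3 * s3) * t3 * z * (s3 * (t3 * s3)) := by
        simp only [mul_assoc]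
      rw [this, h33, hpt3, hs3p]
    rw [← q (D (Y a b c)), h, q]
  have entry1 : ∀ a b c, p * a = a → a * p = a → p * Δ (Y a b c) * p = p * Δ a * p := by
    intro a b c hpa hap
    obtain ⟨D, hD, h1, h2⟩ := hΔ (Y a b c) a
    rw [h1, h2, diag1 D hD a b c hpa hap]
  have main : ∀ a b c, p * a = a → a * p = a → p * b = b → b * p = b → p * c = c → c * p = c →
      ∃ D : A → A, IsCDerivation D ∧ p * Δ (Y a b c) * p = p * D a * p ∧
      t2 * Δ (Y a b c) * s2 = p * D b * p ∧ t3 * Δ (Y a b c) * s3 = p * D c * p := by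
    intro a b c hpa hap hpb hbp hpc hcp
    obtain ⟨D, hD, h1, h2⟩ := hΔ (Y a b c) w
    rw [hΔw] at h2
    refine ⟨D, hD, ?_, ?_, ?_⟩
    · rw [h1, diag1 D hD a b c hpa hap]
    · rw [h1, diag2 D hD a b c hpa hap hpb hbp]
      refine der_shift hD hp h22 hs2p hpt2 ?_ hpb hbp
      rw [← hpw, hD.2.2, ← h2, mul_zero, add_zero, mul_assoc, mul_assoc, hws2, ← mul_assoc,
        der_idem hD hp]
    · rw [h1, diag3 D hD a b c hpa hap hpc hcp]
      refine der_shift hD hp h33 hs3p hpt3 ?_ hpc hcp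
      rw [← ht2w, hD.2.2, ← h2, mul_zero, add_zero, ← hpw, hD.2.2, ← h2, mul_zero, add_zero]
      have : p * (D p * w * w) * s3 = p * D p * (w * (w * s3)) := by simp only [mul_assoc]
      rw [this, hws3, hws2, der_idem hD hp]
  have entry2 : ∀ a b c, p * a = a → a * p = a → p * b = b → b * p = b →
      t2 * Δ (Y a b c) * s2 = p * Δ b * p := by
    intro a b c hpa hap hpb hbp
    obtain ⟨D, hD, h1, h2⟩ := hΔ (Y a b c) (Y b b b)
    obtain ⟨D', hD', k1, k2, k3⟩ := main b b b hpb hbp hpb hbp hpb hbp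
    rw [h1, diag2 D hD a b c hpa hap hpb hbp, ← diag2 D hD b b b hpb hbp hpb hbp, ← h2, k2, ← k1,
      entry1 b b b hpb hbp]
  have entry3 : ∀ a b c, p * a = a → a * p = a → p * c = c → c * p = c →
      t3 * Δ (Y a b c) * s3 = p * Δ c * p := by
    intro a b c hpa hap hpb hbp
    obtain ⟨D, hD, h1, h2⟩ := hΔ (Y a b c) (Y c c c)
    obtain ⟨D', hD', k1, k2, k3⟩ := main c c c hpb hbp hpb hbp hpb hbp
    rw [h1, diag3 D hD a b c hpa hap hpb hbp, ← diag3 D hD c c c hpb hbp hpb hbp, ← h2, k3, ← k1,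
      entry1 c c c hpb hbp]
  have haddp : ∀ a b, p * a = a → a * p = a → p * b = b → b * p = b →
      p * Δ (a + b) * p = p * Δ a * p + p * Δ b * p := by
    intro a b hpa hap hpb hbp
    have hpc : p * (a + b) = a + b := by rw [mul_add, hpa, hpb]
    have hcp : (a + b) * p = a + b := by rw [add_mul, hap, hbp]
    obtain ⟨D, hD, k1, k2, k3⟩ := main a b (a + b) hpa hap hpb hbp hpc hcp
    rw [← entry3 a b (a + b) hpa hap hpc hcp, k3, hD.1, ← entry2 a b (a + b) hpa hap hpb hbp,
      k2, ← entry1 a b (a + b) hpa hap, k1]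
    noncomm_ring
  have c1 : ∀ z, p * (p * z * p) = p * z * p := by
    intro z; rw [← mul_assoc, ← mul_assoc, hp]
  have c2 : ∀ z, (p * z * p) * p = p * z * p := by
    intro z; rw [mul_assoc, hp]
  have c3 : ∀ z, p * Δ z * p = p * Δ (p * z * p) * p := by
    intro z
    rw [compress hΔ hp hΔp z, compress hΔ hp hΔp (p * z * p), c1, c2]
  have := haddp (p * x * p) (p * y * p) (c1 x) (c2 x) (c1 y) (c2 y)
  rw [← c3, ← c3, ← add_mul, ← mul_add, ← c3] at this
  rw [mul_sub, mul_sub, sub_mul, sub_mul, this]; abel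

end matrixunits

end TwoLocal

namespace TwoLocal

section jordan

variable {R : Type*} [Ring R]

lemma semiprime_aux (h2 : ∀ x : R, x + x = 0 → x = 0) (hs : ∀ a : R, (∀ y, a * y * a = 0) → a = 0)
    {a b : R} (h : ∀ x, a * x * b + b * x * a = 0) (x : R) : a * x * b = 0 := by
  have h' : ∀ x, b * x * a = - (a * x * b) := fun x => eq_neg_of_add_eq_zero_right (h x)
  apply hs
  intro y
  apply h2
  have e1 : a * x * b * y * (a * x * b) = - ((b * x * a) * y * (a * x * b)) := by
    rw [h']; noncomm_ring
  have e2 : (b * x * a) * y * (a * x * b) = (b * (x * a * y) * a) * (x * b) := by noncomm_ring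
  have e3 : (a * (x * a * y) * b) * (x * b) = - (a * x * (b * y * a) * (x * b)) := by
    rw [h' y]; noncomm_ring
  have e4 : a * x * (b * y * a) * (x * b) = a * x * b * y * (a * x * b) := by noncomm_ring
  have : a * x * b * y * (a * x * b) = - (a * x * b * y * (a * x * b)) := by
    conv_lhs => rw [e1, e2, h', neg_mul, neg_neg, e3, e4]
  exact add_eq_zero_iff_eq_neg.mpr this

/-- Brešar: Jordan derivations of 2-torsion free semiprime rings are derivations. -/
lemma jordan_der (h2 : ∀ x : R, x + x = 0 → x = 0) (hs : ∀ a : R, (∀ y, a * y * a = 0) → a = 0)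
    (d : R →+ R) (hd : ∀ x, d (x * x) = d x * x + x * d x) (a b : R) :
    d (a * b) = d a * b + a * d b := by
  have half : ∀ x y : R, x + x = y + y → x = y := by
    intro x y hxy
    have : (x - y) + (x - y) = 0 := by
      have : (x - y) + (x - y) = (x + x) - (y + y) := by abel
      rw [this, hxy, sub_self]
    exact sub_eq_zero.mp (h2 _ this)
  have J1 : ∀ x y, d (x * y) + d (y * x) = d x * y + x * d y + d y * x + y * d x := by
    intro x y
    have h := hd (x + y)
    have e : (x + y) * (x + y) = x * x + y * y + (x * y + y * x) := by noncomm_ring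
    rw [e, map_add, map_add, map_add, map_add, hd, hd] at h
    have h' : d (x * y) + d (y * x) = (d x + d y) * (x + y) + (x + y) * (d x + d y) -
      (d x * x + x * d x + (d y * y + y * d y)) := by rw [← h]; abel
    rw [h']; noncomm_ring
  have J2 : ∀ x y, d (x * y * x) = d x * y * x + x * d y * x + x * y * d x := by
    intro x y
    apply half
    have k1 := J1 x (x * y + y * x)
    have k2 := J1 (x * x) y
    have k3 := J1 x y
    have e1 : x * (x * y + y * x) = (x * x) * y + x * y * x := by noncomm_ring
    have e2 : (x * y + y * x) * x = x * y * x + y * (x * x) := by noncomm_ring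
    rw [e1, e2, map_add, map_add, map_add, k3] at k1
    rw [hd] at k2
    have : d (x * y * x) + d (x * y * x) =
      (d (x * x * y) + d (x * y * x) + (d (x * y * x) + d (y * (x * x)))) -
       (d (x * x * y) + d (y * (x * x))) := by abel
    rw [this, k1, k2]; noncomm_ring
  have J3 : ∀ x y z, d (x * y * z) + d (z * y * x) = d x * y * z + x * d y * z + x * y * d z +
      d z * y * x + z * d y * x + z * y * d x := by
    intro x y z
    have h := J2 (x + z) y
    have e : (x + z) * y * (x + z) = x * y * x + z * y * z + (x * y * z + z * y * x) := by
      noncomm_ring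
    rw [e, map_add, map_add, map_add, map_add, J2, J2] at h
    have h' : d (x * y * z) + d (z * y * x) = ((d x + d z) * y * (x + z) + (x + z) * d y * (x + z)
      + (x + z) * y * (d x + d z)) - (d x * y * x + x * d y * x + x * y * d x +
      (d z * y * z + z * d y * z + z * y * d z)) := by rw [← h]; abel
    rw [h']; noncomm_ring
  set F : R → R → R := fun x y => d (x * y) - d x * y - x * d y with hF
  have Fadd1 : ∀ x y z, F (x + y) z = F x z + F y z := by
    intro x y z; simp only [hF, add_mul, map_add]; abel
  have Fadd2 : ∀ x y z, F x (y + z) = F x y + F x z := by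
    intro x y z; simp only [hF, mul_add, map_add]; abel
  have Fsym : ∀ x y, F y x = - F x y := by
    intro x y
    have := J1 x y
    have h' : d (y * x) = d x * y + x * d y + d y * x + y * d x - d (x * y) := by rw [← this]; abel
    simp only [hF, h']; abel
  have J4 : ∀ x y z, F x y * z * (x * y - y * x) + (x * y - y * x) * z * F x y = 0 := by
    intro x y z
    have k1 := J3 (x * y) z (y * x)
    have k2 := J2 x (y * z * y)
    have k3 := J2 y (x * z * x)
    rw [J2 y z] at k2
    rw [J2 x z] at k3
    have e1 : x * y * z * (y * x) = x * (y * z * y) * x := by noncomm_ring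
    have e2 : y * x * z * (x * y) = y * (x * z * x) * y := by noncomm_ring
    rw [e1, e2, k2, k3] at k1
    have hyx : d (y * x) = F y x + d y * x + y * d x := by simp only [hF]; abel
    have hxy : d (x * y) = F x y + d x * y + x * d y := by simp only [hF]; abel
    rw [hyx, hxy, Fsym x y] at k1
    have : F x y * z * (x * y - y * x) + (x * y - y * x) * z * F x y =
      (d x * (y * z * y) * x + x * (d y * z * y + y * d z * y + y * z * d y) * x +
        x * (y * z * y) * d x + (d y * (x * z * x) * y + y * (d x * z * x + x * d z * x +
        x * z * d x) * y + y * (x * z * x) * d y)) - 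
      ((F x y + d x * y + x * d y) * z * (y * x) + x * y * d z * (y * x) +
        x * y * z * (-F x y + d y * x + y * d x) + (-F x y + d y * x + y * d x) * z * (x * y) +
        y * x * d z * (x * y) + y * x * z * (F x y + d x * y + x * d y)) := by noncomm_ring
    rw [this, k1]; abel
  have K1 : ∀ x y z, F x y * z * (x * y - y * x) = 0 := fun x y z =>
    semiprime_aux h2 hs (J4 x y) z
  have K1' : ∀ x y z, (x * y - y * x) * z * F x y = 0 := fun x y z => by
    have := J4 x y z
    rwa [K1, zero_add] at this
  have K2 : ∀ x y c z, F x y * z * (c * y - y * c) = 0 := by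
    intro x y c z
    apply hs
    intro u
    have h := K1 (x + c) y z
    rw [Fadd1] at h
    have e : F x y * z * (c * y - y * c) = - (F c y * z * (x * y - y * x)) := by
      have a1 := K1 x y z
      have a2 := K1 c y z
      have e : (F x y + F c y) * z * ((x + c) * y - y * (x + c)) =
        F x y * z * (x * y - y * x) + F c y * z * (c * y - y * c) + F x y * z * (c * y - y * c) +
        F c y * z * (x * y - y * x) := by noncomm_ring
      rw [e, a1, a2, add_zero, zero_add] at h
      exact eq_neg_of_add_eq_zero_left h
    have : F x y * z * (c * y - y * c) * u * (F x y * z * (c * y - y * c)) =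
      - (F x y * z * ((c * y - y * c) * u * F c y) * z * (x * y - y * x)) := by
      conv_lhs => rhs; rw [e]
      noncomm_ring
    rw [this, K1']; simp
  have K2' : ∀ x y c z, (c * y - y * c) * z * F x y = 0 := by
    intro x y c z
    apply hs
    intro u
    have : (c * y - y * c) * z * F x y * u * ((c * y - y * c) * z * F x y) =
      (c * y - y * c) * z * (F x y * u * (c * y - y * c)) * z * F x y := by noncomm_ring
    rw [this, K2]; simp
  have K3 : ∀ x y c v z, F x y * z * (c * v - v * c) = 0 := by
    intro x y c v z
    apply hs
    intro u
    have h := K2 x (y + v) c z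
    rw [Fadd2] at h
    have e : F x y * z * (c * v - v * c) = - (F x v * z * (c * y - y * c)) := by
      have a1 := K2 x y c z
      have a2 := K2 x v c z
      have e : (F x y + F x v) * z * (c * (y + v) - (y + v) * c) =
        F x y * z * (c * y - y * c) + F x v * z * (c * v - v * c) + F x y * z * (c * v - v * c) +
        F x v * z * (c * y - y * c) := by noncomm_ring
      rw [e, a1, a2, add_zero, zero_add] at h
      exact eq_neg_of_add_eq_zero_left h
    have : F x y * z * (c * v - v * c) * u * (F x y * z * (c * v - v * c)) =
      - (F x y * z * ((c * v - v * c) * u * F x v) * z * (c * y - y * c)) := by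
      conv_lhs => rhs; rw [e]
      noncomm_ring
    rw [this, K2']; simp
  -- `F a b` is central
  have cen : ∀ c, F a b * c = c * F a b := by
    intro c
    rw [← sub_eq_zero]
    apply hs
    intro y
    have : (F a b * c - c * F a b) * y * (F a b * c - c * F a b) =
      F a b * (c * y) * (F a b * c - c * F a b) - c * (F a b * y * (F a b * c - c * F a b)) := by
      noncomm_ring
    rw [this, K3, K3]; simp
  set z := F a b with hz
  set c := a * b - b * a with hc
  have K4 : ∀ u v, z * (u * v - v * u) = 0 := by
    intro u v
    have := K3 a b u v 1
    rwa [mul_one] at this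
  have zc : z * c = 0 := K4 a b
  have cz : c * z = 0 := by rw [← cen, zc]
  have h1 : z * z * d c = 0 := by
    apply h2
    have h := J1 z c
    rw [zc, cz, map_zero, add_zero] at h
    have h' : z * (d z * c + z * d c + d c * z + c * d z) = 0 := by rw [← h, mul_zero]
    have e1 : z * (d z * c + z * d c + d c * z + c * d z) =
      (z * d z) * c + z * z * d c + z * (d c * z) + (z * c) * d z := by noncomm_ring
    rw [e1, zc, cen (d z), mul_assoc (d z), zc, ← cen (d c)] at h'
    simpa [mul_assoc] using h'
  have h3 : z * z + z * z = z * d c := by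
    have e : z + z = d c - (d a * b - b * d a) - (a * d b - d b * a) := by
      have := Fsym a b
      rw [← hz] at this
      have e2 : z + z = F a b - F b a := by rw [this, ← hz]; abel
      rw [e2, hc]
      simp only [hF, map_sub]; abel
    rw [← mul_add, e, mul_sub, mul_sub, K4, K4]; simp
  have h4 : z * z * z = 0 := by
    apply h2
    have : z * z * z + z * z * z = z * (z * z + z * z) := by noncomm_ring
    rw [this, h3, ← mul_assoc, h1]
  have h5 : z * z = 0 := by
    apply hs; intro y
    have : z * z * y * (z * z) = (z * (z * y)) * (z * z) := by noncomm_ring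
    rw [this, cen (z * y)]
    have : z * y * z * (z * z) = z * y * (z * z * z) := by noncomm_ring
    rw [this, h4]; simp
  have h6 : z = 0 := by
    apply hs; intro y
    rw [cen y, mul_assoc, h5, mul_zero]
  have : d (a * b) - d a * b - a * d b = 0 := h6
  rw [sub_sub, sub_eq_zero] at this
  exact this

end jordan

end TwoLocal

namespace TwoLocal

section cstar

variable {A : Type*} [CStarAlgebra A]

lemma ssa_zero {x : A} (h : star x * x = 0) : x = 0 := CStarRing.star_mul_self_eq_zero_iff x |>.mp h

lemma sa_sq_mul_zero {u y : A} (hu : IsSelfAdjoint u) (h : u * u * y = 0) : u * y = 0 := by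
  apply ssa_zero
  rw [star_mul, hu.star_eq, mul_assoc, ← mul_assoc u, h, mul_zero]

lemma exists_character {e : A} (he : e * e = e) (hes : star e = e)
    (hcomm : ∀ x y : A, (e * x * e) * (e * y * e) = (e * y * e) * (e * x * e)) (k : A)
    (hk : e * k * e = k) (hk0 : k ≠ 0) :
    ∃ χ : A → ℂ, χ k ≠ 0 ∧ (∀ x y, e * x * e = x → e * y * e = y → χ (x * y) = χ x * χ y) ∧
      (∀ x y, e * x * e = x → e * y * e = y → χ (x + y) = χ x + χ y) ∧
      (∀ (c : ℂ) x, e * x * e = x → χ (c • x) = c * χ x) ∧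
      (∀ x, e * x * e = x → χ (star x) = star (χ x)) := by
  classical
  set s : Set A := {z | e * z * e = z} with hs
  have hcom : ∀ x ∈ s, ∀ y ∈ s, x * y = y * x := by
    intro x hx y hy
    have := hcomm x y
    rwa [hx, hy] at this
  have hstar : ∀ x ∈ s, star x ∈ s := by
    intro x hx
    change e * star x * e = star x
    conv_rhs => rw [← (show e * x * e = x from hx)]
    simp [hes, mul_assoc]
  let S1 : StarSubalgebra ℂ A := StarSubalgebra.centralizer ℂ s
  let T : StarSubalgebra ℂ A := StarSubalgebra.centralizer ℂ (S1 : Set A)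
  have hsS1 : ∀ x ∈ s, x ∈ S1 := by
    intro x hx
    rw [StarSubalgebra.mem_centralizer_iff]
    exact fun g hg => ⟨hcom g hg x hx, hcom _ (hstar g hg) x hx⟩
  have hsT : ∀ x ∈ s, x ∈ T := by
    intro x hx
    rw [StarSubalgebra.mem_centralizer_iff]
    intro g hg
    have h1 := (StarSubalgebra.mem_centralizer_iff ℂ).mp hg x hx
    have h2 := (StarSubalgebra.mem_centralizer_iff ℂ).mp (star_mem hg : star g ∈ S1) x hx
    exact ⟨h1.1.symm, h2.1.symm⟩
  have hTS1 : ∀ x ∈ T, x ∈ S1 := by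
    intro x hx
    rw [StarSubalgebra.mem_centralizer_iff]
    intro g hg
    exact (StarSubalgebra.mem_centralizer_iff ℂ).mp hx g (hsS1 g hg)
  have hTc : ∀ x y : T, x * y = y * x := by
    intro x y
    apply Subtype.ext
    exact ((StarSubalgebra.mem_centralizer_iff ℂ).mp y.2 x (hTS1 _ x.2)).1
  have hclosed : IsClosed (T : Set A) := by
    have : (T : Set A) = Set.centralizer ((S1 : Set A) ∪ star (S1 : Set A)) :=
      StarSubalgebra.coe_centralizer ℂ (S1 : Set A)
    rw [this]
    exact Set.isClosed_centralizer _
  letI i1 : CStarAlgebra T := StarSubalgebra.cstarAlgebra T (h_closed := hclosed)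
  letI i2 : CommCStarAlgebra T := { i1 with mul_comm := hTc }
  let kT : T := ⟨k, hsT k hk⟩
  have hkT : kT ≠ 0 := by
    intro h
    exact hk0 (congrArg Subtype.val h)
  have hg : WeakDual.gelfandTransform ℂ T kT ≠ 0 := by
    intro h
    apply hkT
    apply (gelfandTransform_isometry T).injective
    rw [h, map_zero]
  obtain ⟨χ, hχ⟩ : ∃ χ : WeakDual.characterSpace ℂ T, χ kT ≠ 0 := by
    by_contra hcon
    push Not at hcon
    apply hg
    ext χ
    simpa using hcon χ
  refine ⟨fun x => if hx : x ∈ T then χ ⟨x, hx⟩ else 0, ?_, ?_, ?_, ?_, ?_⟩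
  · simpa [hsT k hk] using hχ
  · intro x y hx hy
    have hx := hsT x hx
    have hy := hsT y hy
    beta_reduce
    rw [dif_pos hx, dif_pos hy, dif_pos (mul_mem hx hy), ← map_mul]; rfl
  · intro x y hx hy
    have hx := hsT x hx
    have hy := hsT y hy
    beta_reduce
    rw [dif_pos hx, dif_pos hy, dif_pos (add_mem hx hy), ← map_add]; rfl
  · intro c x hx
    have hx := hsT x hx
    beta_reduce
    rw [dif_pos hx, dif_pos (SMulMemClass.smul_mem c hx), ← smul_eq_mul, ← map_smul]; rfl
  · intro x hx
    have hx := hsT x hx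
    beta_reduce
    rw [dif_pos hx, dif_pos (star_mem hx), ← map_star]; rfl

lemma abelian_der_sa {e : A} (he : e * e = e) (hes : star e = e)
    (hcomm : ∀ x y : A, (e * x * e) * (e * y * e) = (e * y * e) * (e * x * e))
    {D : A → A} (hD : IsCDerivation D) (hDe : D e = 0) {h : A} (hh : IsSelfAdjoint h)
    (heh : e * h * e = h) : D h = 0 := by
  by_contra hne
  have exp : ∀ z, e * z * e = z → e * D z * e = D z := by
    intro z hz
    conv_rhs => rw [← hz, hD.2.2, hD.2.2, hDe]
    simp
  obtain ⟨χ, h0, hmul, hadd, hsmul, hst⟩ := exists_character he hes hcomm (D h) (exp h heh) hne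
  apply h0
  have hee : e * e * e = e := by rw [he, he]
  -- the case when χ e = 0
  by_cases hχe : χ e = 0
  · have : D h = e * D h := by
      conv_rhs => rw [← exp h heh]
      rw [← mul_assoc, ← mul_assoc, he, exp h heh]
    rw [this, hmul e (D h) hee (exp h heh), hχe, zero_mul]
  have hχ1 : χ e = 1 := by
    have := hmul e e hee hee
    rw [he] at this
    exact (mul_eq_left₀ hχe).mp this.symm
  have hreal : star (χ h) = χ h := by rw [← hst h heh, hh.star_eq]
  obtain ⟨r, hr⟩ : ∃ r : ℝ, (r : ℂ) = χ h := Complex.conj_eq_iff_real.mp hreal |>.imp fun _ h => h.symm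
  set k := h + (-(r : ℂ)) • e with hk
  have hee2 : e * ((-(r : ℂ)) • e) * e = (-(r : ℂ)) • e := by
    rw [mul_smul_comm, smul_mul_assoc, hee]
  have hke : e * k * e = k := by rw [hk, mul_add, add_mul, heh, hee2]
  have hχk : χ k = 0 := by
    rw [hk, hadd _ _ heh hee2, hsmul _ _ hee, hχ1, hr]; simp
  have hksa : IsSelfAdjoint k := by
    rw [hk]
    apply hh.add
    rw [isSelfAdjoint_iff, star_smul, hes]; simp
  have hDk : D k = D h := by
    rw [hk, hD.1, hD.2.1, hDe]; simp
  let fu : ℝ → ℝ := fun t => √(max t 0) + √(max (-t) 0)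
  let fv : ℝ → ℝ := fun t => √(max t 0) - √(max (-t) 0)
  have cu : Continuous fu := by fun_prop
  have cv : Continuous fv := by fun_prop
  have huv : ∀ t, fu t * fv t = t := by
    intro t
    have : fu t * fv t = √(max t 0) ^ 2 - √(max (-t) 0) ^ 2 := by simp only [fu, fv]; ring
    rw [this, Real.sq_sqrt (le_max_right _ _), Real.sq_sqrt (le_max_right _ _)]
    rcases le_total t 0 with h | h
    · rw [max_eq_right h, max_eq_left (by linarith)]; ring
    · rw [max_eq_left h, max_eq_right (by linarith)]; ring
  have huu : ∀ t, fu t * fu t = fv t * fv t := by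
    intro t
    have : fu t * fu t - fv t * fv t = 4 * (√(max t 0) * √(max (-t) 0)) := by
      simp only [fu, fv]; ring
    have h0 : √(max t 0) * √(max (-t) 0) = 0 := by
      rcases le_total t 0 with h | h
      · rw [max_eq_right h]; simp
      · rw [max_eq_right (by linarith : -t ≤ 0)]; simp
    rw [h0] at this; linarith
  set u := cfc fu k with hu
  set v := cfc fv k with hv
  have husa : IsSelfAdjoint u := cfc_predicate fu k
  have hvsa : IsSelfAdjoint v := cfc_predicate fv k
  have Huv : u * v = k := by
    rw [hu, hv, ← cfc_mul fu fv k cu.continuousOn cv.continuousOn]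
    simp only [huv]
    exact cfc_id' ℝ k
  have Huu : u * u = v * v := by
    rw [hu, hv, ← cfc_mul fu fu k cu.continuousOn cu.continuousOn,
      ← cfc_mul fv fv k cv.continuousOn cv.continuousOn]
    simp only [huu]
  have Hvu : v * u = k := by
    have := congrArg star Huv
    rwa [star_mul, husa.star_eq, hvsa.star_eq, hksa.star_eq] at this
  have hk1 : k * (1 - e) = 0 := by
    rw [← hke, mul_assoc, mul_sub, he, mul_one, sub_self, mul_zero]
  have hu1 : u * (1 - e) = 0 := by
    apply sa_sq_mul_zero husa
    have hsq : IsSelfAdjoint (u * u) := by rw [isSelfAdjoint_iff, star_mul, husa.star_eq]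
    apply sa_sq_mul_zero hsq
    have h1 : u * u * (u * u) * (1 - e) = u * u * (v * v) * (1 - e) := by rw [← Huu]
    have h2 : u * u * (v * v) * (1 - e) = u * (u * v) * (v * (1 - e)) := by noncomm_ring
    have h3 : u * (u * v) * (v * (1 - e)) = u * (v * u) * (v * (1 - e)) := by rw [Huv, Hvu]
    have this := h1.trans (h2.trans h3)
    have e3 : u * (v * u) * (v * (1 - e)) = (u * v) * ((u * v) * (1 - e)) := by noncomm_ring
    rw [this, e3, Huv, hk1, mul_zero]
  have hv1 : v * (1 - e) = 0 := by
    apply sa_sq_mul_zero hvsa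
    rw [← Huu, mul_assoc, hu1, mul_zero]
  have mem : ∀ z : A, IsSelfAdjoint z → z * (1 - e) = 0 → e * z * e = z := by
    intro z hz h1
    rw [mul_sub, mul_one, sub_eq_zero] at h1
    have h2 := congrArg star h1
    rw [star_mul, hz.star_eq, hes] at h2
    rw [← h2, ← h1]
  have hum := mem u husa hu1
  have hvm := mem v hvsa hv1
  have x1 : χ u * χ v = 0 := by rw [← hmul u v hum hvm, Huv, hχk]
  have x2 : χ u * χ u = χ v * χ v := by rw [← hmul u u hum hum, ← hmul v v hvm hvm, Huu]
  have x3 : χ u = 0 ∧ χ v = 0 := by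
    rcases mul_eq_zero.mp x1 with h | h
    · rw [h, mul_zero] at x2
      exact ⟨h, mul_self_eq_zero.mp x2.symm⟩
    · rw [h, mul_zero] at x2
      exact ⟨mul_self_eq_zero.mp x2, h⟩
  have memmul : ∀ x y : A, e * x * e = x → e * y * e = y → e * (x * y) * e = x * y := by
    intro x y hx hy
    have hx' : e * x = x := by rw [← hx, ← mul_assoc, ← mul_assoc, he]
    have hy' : y * e = y := by rw [← hy, mul_assoc, he]
    rw [← mul_assoc, hx', mul_assoc, hy']
  rw [← hDk, ← Huv, hD.2.2, hadd _ _ (memmul _ _ (exp u hum) hvm) (memmul _ _ hum (exp v hvm)),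
    hmul _ _ (exp u hum) hvm, hmul _ _ hum (exp v hvm), x3.1, x3.2]
  simp

lemma abelian_der {e : A} (he : e * e = e) (hes : star e = e)
    (hcomm : ∀ x y : A, (e * x * e) * (e * y * e) = (e * y * e) * (e * x * e))
    {D : A → A} (hD : IsCDerivation D) (hDe : D e = 0) {z : A}
    (hz : e * z * e = z) : D z = 0 := by
  have hzs : e * star z * e = star z := by
    conv_rhs => rw [← hz]
    simp [hes, mul_assoc]
  have h1 : D (z + star z) = 0 := by
    apply abelian_der_sa he hes hcomm hD hDe (IsSelfAdjoint.add_star_self z)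
    rw [mul_add, add_mul, hz, hzs]
  have h2 : D (Complex.I • (z - star z)) = 0 := by
    apply abelian_der_sa he hes hcomm hD hDe
    · rw [isSelfAdjoint_iff, star_smul, star_sub, star_star]
      simp
      rw [← smul_neg, neg_sub]
    · rw [mul_smul_comm, smul_mul_assoc, mul_sub, sub_mul, hz, hzs]
  rw [hD.2.1] at h2
  have h2' : D (z - star z) = 0 := (smul_eq_zero.mp h2).resolve_left Complex.I_ne_zero
  have h3 : D ((2 : ℂ) • z) = 0 := by
    have : (2 : ℂ) • z = (z + star z) + (z - star z) := by rw [two_smul]; abel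
    rw [this, hD.1, h1, h2', add_zero]
  rw [hD.2.1] at h3
  exact (smul_eq_zero.mp h3).resolve_left two_ne_zero

lemma abelian_additive {Δ : A → A} (hΔ : Is2LocalDerivation Δ) {e : A}
    (he : e * e = e) (hes : star e = e)
    (hcomm : ∀ x y : A, (e * x * e) * (e * y * e) = (e * y * e) * (e * x * e)) (x y : A) :
    e * (Δ (x + y) - Δ x - Δ y) * e = 0 := by
  wlog hN : Δ e = 0 generalizing Δ
  · obtain ⟨D₀, hD₀, h1, h2⟩ := hΔ e e
    have := this (sub_two_local hΔ hD₀) (by simp [h1])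
    simp only [hD₀.1] at this
    rw [← this]; noncomm_ring
  have key : ∀ z, e * Δ z * e = 0 := by
    intro z
    rw [compress hΔ he hN]
    obtain ⟨D, hD, h1, h2⟩ := hΔ (e * z * e) e
    rw [h1]
    apply abelian_der he hes hcomm hD (by rw [← h2, hN])
    have : e * (e * z * e) * e = (e * e) * z * (e * e) := by noncomm_ring
    rw [this, he]
  rw [mul_sub, mul_sub, sub_mul, sub_mul, key, key, key]; simp

end cstar

end TwoLocal

namespace TwoLocal

section rickart

variable {A : Type*} [CStarAlgebra A]

/-- Every selfadjoint element has a range projection. -/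
def Rick (A : Type*) [CStarAlgebra A] : Prop :=
  ∀ T : A, IsSelfAdjoint T → ∃ g : A, star g = g ∧ g * g = g ∧ g * T = T ∧
    ∀ X : A, X * T = 0 → X * g = 0

lemma cut (hR : Rick A) {h : A} (hh : IsSelfAdjoint h) {ε t : ℝ} (hε : 0 < ε)
    (ht : t ∈ spectrum ℝ h) (hεt : ε < t) :
    ∃ g : A, star g = g ∧ g * g = g ∧ g ≠ 0 ∧
      (∀ φ : ℝ → ℝ, Continuous φ → (∀ s, φ s * max (s - ε) 0 = 0) → cfc φ h * g = 0) ∧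
      (∀ q, star q = q → q * h = h → q * g = g) := by
  let f : ℝ → ℝ := fun s => max (s - ε) 0
  have cf : Continuous f := by fun_prop
  obtain ⟨g, hg1, hg2, hg3, hg4⟩ := hR (cfc f h) (cfc_predicate f h)
  refine ⟨g, hg1, hg2, ?_, ?_, ?_⟩
  · rintro rfl
    rw [zero_mul] at hg3
    have h0 : cfc f h = cfc (fun _ => (0 : ℝ)) h := by rw [← hg3, cfc_const_zero]
    have := (cfc_eq_cfc_iff_eqOn (R := ℝ) hh cf.continuousOn continuousOn_const).mp h0 ht
    simp only [f] at this
    rw [max_eq_left (by linarith)] at this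
    linarith
  · intro φ cφ hφ
    apply hg4
    rw [← cfc_mul φ f h cφ.continuousOn cf.continuousOn]
    have : (fun x => φ x * f x) = fun _ => (0 : ℝ) := funext hφ
    rw [this, cfc_const_zero]
  · intro q hq hqh
    let ψ : ℝ → ℝ := fun s => max (s - ε) 0 / max s ε
    have hpos : ∀ s, max s ε ≠ 0 := fun s => (lt_of_lt_of_le hε (le_max_right _ _)).ne'
    have cψ : Continuous ψ := by
      apply Continuous.div
      · fun_prop
      · fun_prop
      · exact hpos
    have hT : cfc f h = h * cfc ψ h := by
      have e1 : cfc (fun s => s * ψ s) h = h * cfc ψ h := by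
        rw [cfc_mul (fun s => s) ψ h continuousOn_id cψ.continuousOn, cfc_id' ℝ h]
      rw [← e1]
      congr 1
      funext s
      simp only [f, ψ]
      rcases le_total s ε with hs | hs
      · rw [max_eq_right (by linarith)]; simp
      · rw [max_eq_left hs, max_eq_left (by linarith)]
        have : s ≠ 0 := by linarith
        field_simp
    have h1 : (1 - q) * cfc f h = 0 := by
      rw [hT, ← mul_assoc, sub_mul, hqh, one_mul, sub_self, zero_mul]
    have h2 := hg4 _ h1
    rw [sub_mul, one_mul, sub_eq_zero] at h2
    exact h2.symm

lemma exists_pos_spec {d : A} (hd : IsSelfAdjoint d) (h0 : d ≠ 0) :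
    ∃ t : ℝ, t ≠ 0 ∧ t ∈ spectrum ℝ d := by
  by_contra hcon
  push Not at hcon
  apply h0
  rw [← cfc_id' ℝ d]
  rw [← cfc_const_zero ℝ d]
  apply cfc_congr
  intro t ht
  by_contra h1
  exact hcon t h1 ht

lemma pos_proj (hR : Rick A) {d : A} (hd : IsSelfAdjoint d) {t : ℝ} (ht : t ∈ spectrum ℝ d)
    (ht0 : 0 < t) :
    ∃ f : A, star f = f ∧ f * f = f ∧ f ≠ 0 ∧
      ∀ e, star e = e → f * e = e → e * d * e = 0 → e = 0 := by
  obtain ⟨g, hg1, hg2, hg3, hg4, -⟩ := cut hR hd (half_pos ht0) ht (half_lt_self ht0)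
  refine ⟨g, hg1, hg2, hg3, ?_⟩
  intro e hes hge hede
  set ε := t / 2 with hε
  have hε0 : 0 < ε := half_pos ht0
  have hpos : ∀ s, 0 < max s ε := fun s => lt_of_lt_of_le hε0 (le_max_right _ _)
  let σf : ℝ → ℝ := fun s => √(max s ε)
  let τf : ℝ → ℝ := fun s => (√(max s ε))⁻¹
  let φ : ℝ → ℝ := fun s => s - σf s * σf s
  have cσ : Continuous σf := by fun_prop
  have hσ0 : ∀ s, √(max s ε) ≠ 0 := fun s => (Real.sqrt_pos.mpr (hpos s)).ne'
  have cτ : Continuous τf := Continuous.inv₀ cσ hσ0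
  have cφ : Continuous φ := by fun_prop
  have hσσ : ∀ s, σf s * σf s = max s ε := fun s => Real.mul_self_sqrt (hpos s).le
  have h1 := hg4 φ cφ (by
    intro s
    simp only [φ, hσσ]
    rcases le_total s ε with hs | hs
    · rw [max_eq_right (by linarith : s - ε ≤ 0), mul_zero]
    · rw [max_eq_left hs]; simp)
  have h2 : cfc φ d = d - cfc σf d * cfc σf d := by
    rw [cfc_sub (fun s => s) (fun s => σf s * σf s) d continuousOn_id (by fun_prop), cfc_id' ℝ d,
      cfc_mul σf σf d cσ.continuousOn cσ.continuousOn]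
  have hσsa : IsSelfAdjoint (cfc σf d) := cfc_predicate σf d
  have hτσ : cfc τf d * cfc σf d = 1 := by
    rw [← cfc_mul τf σf d cτ.continuousOn cσ.continuousOn, ← cfc_const_one ℝ d]
    congr 1
    funext s
    simp only [τf, σf]
    rw [inv_mul_cancel₀ (hσ0 s)]
  have h3 : d * e = cfc σf d * cfc σf d * e := by
    rw [h2, sub_mul, sub_eq_zero] at h1
    rw [← hge, ← mul_assoc, h1, mul_assoc]
  have h4 : cfc σf d * e = 0 := by
    apply ssa_zero
    rw [star_mul, hes, hσsa.star_eq, mul_assoc, ← mul_assoc (cfc σf d), ← h3, ← mul_assoc, hede]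
  rw [← one_mul e, ← hτσ, mul_assoc, h4, mul_zero]

lemma partial_isometry (hR : Rick A) {x q : A} (hx : x ≠ 0) (hq : star q = q) (hxq : x * q = x) :
    ∃ v w : A, v = x * w ∧ v ≠ 0 ∧ (star v * v) * (star v * v) = star v * v ∧
      v * (star v * v) = v ∧ q * (star v * v) = star v * v := by
  set h := star x * x with hh
  have hsa : IsSelfAdjoint h := IsSelfAdjoint.star_mul_self x
  have hh0 : h ≠ 0 := fun h0 => hx (ssa_zero h0)
  obtain ⟨t, ht0, ht⟩ := exists_pos_spec hsa hh0
  have htpos : 0 < t := lt_of_le_of_ne (spectrum_star_mul_self_nonneg t ht) ht0.symm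
  obtain ⟨g, hg1, hg2, hg3, hg4, hg5⟩ := cut hR hsa (half_pos htpos) ht (half_lt_self htpos)
  set ε := t / 2 with hε
  have hε0 : 0 < ε := half_pos htpos
  have hpos : ∀ s, 0 < max s ε := fun s => lt_of_lt_of_le hε0 (le_max_right _ _)
  let τf : ℝ → ℝ := fun s => (√(max s ε))⁻¹
  have hσ0 : ∀ s, √(max s ε) ≠ 0 := fun s => (Real.sqrt_pos.mpr (hpos s)).ne'
  have cτ : Continuous τf := Continuous.inv₀ (by fun_prop) hσ0
  let φ : ℝ → ℝ := fun s => τf s * (s * τf s) - 1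
  have cφ : Continuous φ := by fun_prop
  have h1 := hg4 φ cφ (by
    intro s
    simp only [φ, τf]
    rcases le_total s ε with hs | hs
    · rw [max_eq_right (by linarith : s - ε ≤ 0), mul_zero]
    · have hs0 : 0 < s := lt_of_lt_of_le hε0 hs
      have e1 : (√(max s ε))⁻¹ * (s * (√(max s ε))⁻¹) = 1 := by
        have e2 := Real.mul_self_sqrt (hpos s).le
        have e3 := hσ0 s
        have e4 : max s ε = s := max_eq_left hs
        rw [e4] at e2 e3 ⊢
        field_simp
        nlinarith
      rw [e1, sub_self, zero_mul])
  set τ := cfc τf h with hτ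
  have hτsa : IsSelfAdjoint τ := cfc_predicate τf h
  have h2 : cfc φ h = τ * (h * τ) - 1 := by
    rw [cfc_sub (fun s => τf s * (s * τf s)) (fun _ => 1) h (by fun_prop) continuousOn_const,
      cfc_mul τf (fun s => s * τf s) h (by fun_prop) (by fun_prop),
      cfc_mul (fun s => s) τf h continuousOn_id (by fun_prop), cfc_id' ℝ h, cfc_const_one ℝ h]
  rw [h2, sub_mul, one_mul, sub_eq_zero] at h1
  have hvv : star (x * (τ * g)) * (x * (τ * g)) = g := by
    have : star (x * (τ * g)) * (x * (τ * g)) = g * (τ * (star x * x * τ) * g) := by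
      rw [star_mul, star_mul, hg1, hτsa.star_eq]; noncomm_ring
    rw [this, ← hh, h1, hg2]
  refine ⟨x * (τ * g), τ * g, rfl, ?_, ?_, ?_, ?_⟩
  · intro h0
    rw [h0, mul_zero] at hvv
    exact hg3 hvv.symm
  · rw [hvv, hg2]
  · rw [hvv, mul_assoc, mul_assoc, hg2]
  · rw [hvv]
    apply hg5 q hq
    have := congrArg star hxq
    rw [star_mul, hq] at this
    rw [hh, ← mul_assoc, this]

lemma norm_proj_le {f : A} (hfs : star f = f) (hf : f * f = f) : ‖f‖ ≤ 1 := by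
  have h := CStarRing.norm_star_mul_self (x := f)
  rw [hfs, hf] at h
  by_contra hlt
  push Not at hlt
  nlinarith

lemma comm_step (hR : Rick A) {f : A} (hfs : star f = f) (hf : f * f = f) (z : A)
    (hfz : f * z = z * f)
    (H : ∀ g, star g = g → g * g = g → f * g = g → g * z = z * g)
    {h : A} (hh : IsSelfAdjoint h) (hfh : f * h = h) {r : ℝ} (hr : ‖h‖ ≤ r) :
    ∃ k, IsSelfAdjoint k ∧ f * k = k ∧ ‖k‖ ≤ r / 2 ∧ (h - k) * z = z * (h - k) := by
  have hr0 : 0 ≤ r := (norm_nonneg _).trans hr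
  let Pf : ℝ → ℝ := fun t => max t 0
  let Nf : ℝ → ℝ := fun t => max (-t) 0
  have cP : Continuous Pf := by fun_prop
  have cN : Continuous Nf := by fun_prop
  set P := cfc Pf h with hP
  set N := cfc Nf h with hN
  have hPsa : IsSelfAdjoint P := cfc_predicate Pf h
  have hNsa : IsSelfAdjoint N := cfc_predicate Nf h
  have hPN : P - N = h := by
    rw [hP, hN, ← cfc_sub Pf Nf h cP.continuousOn cN.continuousOn]
    conv_rhs => rw [← cfc_id' ℝ h]
    congr 1
    funext t
    simp only [Pf, Nf]
    rcases le_total t 0 with h | h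
    · rw [max_eq_right h, max_eq_left (by linarith)]; ring
    · rw [max_eq_left h, max_eq_right (by linarith)]; ring
  have hNP : N * P = 0 := by
    rw [hP, hN, ← cfc_mul Nf Pf h cN.continuousOn cP.continuousOn, ← cfc_const_zero ℝ h]
    congr 1
    funext t
    simp only [Pf, Nf]
    rcases le_total t 0 with h | h
    · rw [max_eq_right h]; simp
    · rw [max_eq_right (by linarith : -t ≤ 0)]; simp
  have hhf : h * f = h := by
    have := congrArg star hfh
    rwa [star_mul, hfs, hh.star_eq] at this
  have hPP : h * P = P * P := by rw [← hPN, sub_mul, hNP, sub_zero]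
  have hPP2 : P * h = P * P := by
    have := congrArg star hPP
    rwa [star_mul, star_mul, hPsa.star_eq, hh.star_eq] at this
  have hP1 : P * (1 - f) = 0 := by
    apply sa_sq_mul_zero hPsa
    rw [← hPP2, mul_assoc, mul_sub, mul_one, hhf, sub_self, mul_zero]
  have h1P : (1 - f) * P = 0 := by
    have := congrArg star hP1
    rwa [star_mul, star_sub, star_one, hfs, hPsa.star_eq, star_zero] at this
  obtain ⟨g, hg1, hg2, hg3, hg4⟩ := hR P hPsa
  have hfg : f * g = g := by
    have := hg4 _ h1P
    rw [sub_mul, one_mul, sub_eq_zero] at this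
    exact this.symm
  have hgf : g * f = g := by
    have := congrArg star hfg
    rwa [star_mul, hfs, hg1] at this
  have hNg : N * g = 0 := hg4 _ hNP
  have hPg : P * g = P := by
    have := congrArg star hg3
    rwa [star_mul, hg1, hPsa.star_eq] at this
  have hhg : h * g = P := by rw [← hPN, sub_mul, hNg, hPg, sub_zero]
  have hgh : g * h = P := by
    have := congrArg star hhg
    rwa [star_mul, hg1, hPsa.star_eq, hh.star_eq] at this
  set u := (2 : ℝ) • g - f with hu
  have hhu : h * u = P + N := by
    rw [hu, mul_sub, mul_smul_comm, hhg, hhf, ← hPN, two_smul]; abel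
  have huh : u * h = P + N := by
    rw [hu, sub_mul, smul_mul_assoc, hgh, hfh, ← hPN, two_smul]; abel
  have huu : u * u = f := by
    have : u * u = (4 : ℝ) • (g * g) - (2 : ℝ) • (g * f) - (2 : ℝ) • (f * g) + f * f := by
      rw [hu]
      simp only [sub_mul, mul_sub, smul_mul_assoc, mul_smul_comm]
      module
    rw [this, hg2, hgf, hfg, hf]
    module
  have husa : star u = u := by
    rw [hu, star_sub, star_smul, hg1, hfs]; simp
  set k := h - (r / 2) • u with hk
  have hksa : IsSelfAdjoint k := by
    rw [isSelfAdjoint_iff, hk, star_sub, star_smul, husa, hh.star_eq]; simp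
  have hfu : f * u = u := by rw [hu, mul_sub, mul_smul_comm, hfg, hf]
  have hfk : f * k = k := by rw [hk, mul_sub, mul_smul_comm, hfh, hfu]
  have hkf : k * f = k := by
    have := congrArg star hfk
    rwa [star_mul, hfs, hksa.star_eq] at this
  let Wf : ℝ → ℝ := fun t => t * t - r * (Pf t + Nf t) + r ^ 2 / 4
  have hW : cfc Wf h = h * h - r • (P + N) + algebraMap ℝ A (r ^ 2 / 4) := by
    rw [cfc_add_const (r ^ 2 / 4) (fun t => t * t - r * (Pf t + Nf t)) h (by fun_prop) hh,
      cfc_sub (fun t => t * t) (fun t => r * (Pf t + Nf t)) h (by fun_prop) (by fun_prop),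
      cfc_const_mul r (fun t => Pf t + Nf t) h (by fun_prop),
      cfc_add h Pf Nf (by fun_prop) (by fun_prop),
      cfc_mul (fun t => t) (fun t => t) h (by fun_prop) (by fun_prop), cfc_id' ℝ h]
  have hkk : k * k = f * cfc Wf h * f := by
    have e1 : k * k = h * h - (r / 2) • (h * u) - (r / 2) • (u * h) + (r ^ 2 / 4) • (u * u) := by
      rw [hk]
      simp only [sub_mul, mul_sub, smul_mul_assoc, mul_smul_comm]
      module
    have e2 : k * k = cfc Wf h + (r ^ 2 / 4) • (f - 1) := by
      rw [e1, hW, hhu, huh, huu, Algebra.algebraMap_eq_smul_one]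
      module
    have e3 : f * (k * k) * f = k * k := by
      rw [← mul_assoc, hfk, mul_assoc, hkf]
    rw [← e3, e2, mul_add, add_mul, mul_smul_comm, smul_mul_assoc, mul_sub, hf, mul_one, sub_self]
    simp
  have hnW : ‖cfc Wf h‖ ≤ (r / 2) ^ 2 := by
    rcases subsingleton_or_nontrivial A with hsub | hnon
    · rw [Subsingleton.elim (cfc Wf h) 0, norm_zero]; positivity
    apply norm_cfc_le (by positivity)
    intro t ht
    have ht' : ‖t‖ ≤ r := (spectrum.norm_le_norm_of_mem ht).trans hr
    have habs : Pf t + Nf t = |t| := by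
      simp only [Pf, Nf]
      rcases le_total t 0 with h | h
      · rw [max_eq_right h, max_eq_left (by linarith), abs_of_nonpos h]; ring
      · rw [max_eq_left h, max_eq_right (by linarith), abs_of_nonneg h]; ring
    have e1 : Wf t = (|t| - r / 2) ^ 2 := by
      simp only [Wf]
      rw [habs, ← abs_mul_abs_self t]; ring
    rw [Real.norm_eq_abs] at ht'
    rw [e1, Real.norm_eq_abs, abs_of_nonneg (sq_nonneg _)]
    nlinarith [abs_nonneg t]
  have hnk : ‖k‖ ≤ r / 2 := by
    have h1 := CStarRing.norm_star_mul_self (x := k)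
    rw [hksa.star_eq, hkk] at h1
    have h2 : ‖f * cfc Wf h * f‖ ≤ (r / 2) ^ 2 := by
      have hf1 := norm_proj_le hfs hf
      calc ‖f * cfc Wf h * f‖ ≤ ‖f‖ * ‖cfc Wf h‖ * ‖f‖ :=
            (norm_mul_le _ _).trans (by gcongr; exact norm_mul_le _ _)
        _ ≤ 1 * (r / 2) ^ 2 * 1 := by gcongr
        _ = _ := by ring
    rw [h1] at h2
    exact abs_le_of_sq_le_sq' (by nlinarith) (by positivity) |>.2
  refine ⟨k, hksa, hfk, hnk, ?_⟩
  have : h - k = (r / 2) • u := by rw [hk]; abel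
  rw [this, hu, smul_mul_assoc, mul_smul_comm, sub_mul, mul_sub, smul_mul_assoc, mul_smul_comm,
    H g hg1 hg2 hfg, hfz]

lemma comm_sa (hR : Rick A) {f : A} (hfs : star f = f) (hf : f * f = f) (z : A)
    (hfz : f * z = z * f)
    (H : ∀ g, star g = g → g * g = g → f * g = g → g * z = z * g)
    {h : A} (hh : IsSelfAdjoint h) (hfh : f * h = h) : h * z = z * h := by
  have key : ∀ n : ℕ, ∃ k, IsSelfAdjoint k ∧ f * k = k ∧ ‖k‖ ≤ ‖h‖ / 2 ^ n ∧
      (h - k) * z = z * (h - k) := by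
    intro n
    induction n with
    | zero => exact ⟨h, hh, hfh, by simp, by simp⟩
    | succ n ih =>
      obtain ⟨k, h1, h2, h3, h4⟩ := ih
      obtain ⟨l, g1, g2, g3, g4⟩ := comm_step hR hfs hf z hfz H h1 h2 h3
      refine ⟨l, g1, g2, ?_, ?_⟩
      · rw [pow_succ, ← div_div]; exact g3
      · have : h - l = (h - k) + (k - l) := by abel
        rw [this, add_mul, mul_add, h4, g4]
  have bound : ∀ n : ℕ, ‖h * z - z * h‖ ≤ (2 * ‖h‖ * ‖z‖) * (1 / 2) ^ n := by
    intro n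
    obtain ⟨k, h1, h2, h3, h4⟩ := key n
    have : h * z - z * h = k * z - z * k := by
      rw [sub_mul, mul_sub] at h4
      have h5 : h * z - z * h - (k * z - z * k) = (h * z - k * z) - (z * h - z * k) := by abel
      rw [h4, sub_self, sub_eq_zero] at h5
      exact h5
    rw [this]
    calc ‖k * z - z * k‖ ≤ ‖k‖ * ‖z‖ + ‖z‖ * ‖k‖ :=
          (norm_sub_le _ _).trans (add_le_add (norm_mul_le _ _) (norm_mul_le _ _))
      _ = 2 * ‖k‖ * ‖z‖ := by ring
      _ ≤ 2 * (‖h‖ / 2 ^ n) * ‖z‖ := by gcongr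
      _ = _ := by rw [one_div, inv_pow]; ring
  have lim : Filter.Tendsto (fun n : ℕ => (2 * ‖h‖ * ‖z‖) * (1 / 2 : ℝ) ^ n) Filter.atTop
      (nhds ((2 * ‖h‖ * ‖z‖) * 0)) :=
    (tendsto_pow_atTop_nhds_zero_of_lt_one (by norm_num) (by norm_num)).const_mul _
  rw [mul_zero] at lim
  have h0 := ge_of_tendsto' lim bound
  exact sub_eq_zero.mp (norm_le_zero_iff.mp h0)

lemma split_of_noncomm (hR : Rick A) {f : A} (hfs : star f = f) (hf : f * f = f)
    (hnc : ¬ ∀ x y : A, (f * x * f) * (f * y * f) = (f * y * f) * (f * x * f)) :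
    ∃ g x : A, star g = g ∧ g * g = g ∧ f * g = g ∧ g * x * (f - g) ≠ 0 := by
  by_contra hcon
  push Not at hcon
  apply hnc
  have H : ∀ y g, star g = g → g * g = g → f * g = g → g * (f * y * f) = (f * y * f) * g := by
    intro y g h1 h2 h3
    have h4 : g * f = g := by
      have := congrArg star h3
      rwa [star_mul, hfs, h1] at this
    have a1 := hcon g y h1 h2 h3
    have a2 := congrArg star (hcon g (star y) h1 h2 h3)
    simp only [star_mul, star_sub, star_star, h1, hfs, star_zero] at a2
    have b1 : g * (f * y * f) = g * y * g := by
      rw [mul_sub, sub_eq_zero] at a1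
      rw [← a1, ← mul_assoc, ← mul_assoc, h4]
    have b2 : f * y * f * g = g * y * g := by
      rw [sub_mul, sub_eq_zero] at a2
      rw [mul_assoc, h3, mul_assoc, a2, ← mul_assoc]
    rw [b1, b2]
  intro x y
  have hz : f * (f * y * f) = (f * y * f) * f := by
    rw [mul_assoc _ f f, hf, ← mul_assoc, ← mul_assoc, hf]
  have hsa : ∀ h, IsSelfAdjoint h → f * h = h → h * (f * y * f) = f * y * f * h :=
    fun h h1 h2 => comm_sa hR hfs hf _ hz (H y) h1 h2
  set w := f * x * f with hw
  have hfw : f * w = w := by rw [hw, ← mul_assoc, ← mul_assoc, hf]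
  have hfw2 : f * star w = star w := by
    rw [hw]; simp only [star_mul, hfs]; rw [← mul_assoc, hf]
  set v := f * y * f with hv
  have c1 := hsa (w + star w) (IsSelfAdjoint.add_star_self w) (by rw [mul_add, hfw, hfw2])
  have c2 := hsa (Complex.I • (w - star w)) (by
      rw [isSelfAdjoint_iff, star_smul, star_sub, star_star]
      simp
      rw [← smul_neg, neg_sub]) (by rw [mul_smul_comm, mul_sub, hfw, hfw2])
  rw [smul_mul_assoc, mul_smul_comm] at c2
  have c2 := smul_right_injective A Complex.I_ne_zero c2
  have c3 : (2 : ℂ) • (w * v) = (2 : ℂ) • (v * w) := by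
    have e1 : (2 : ℂ) • (w * v) = (w + star w) * v + (w - star w) * v := by
      rw [two_smul]; noncomm_ring
    have e2 : (2 : ℂ) • (v * w) = v * (w + star w) + v * (w - star w) := by
      rw [two_smul]; noncomm_ring
    rw [e1, e2, c1, c2]
  exact smul_right_injective A two_ne_zero c3

lemma exists_good (hR : Rick A) {Δ : A → A} (hΔ : Is2LocalDerivation Δ) {f : A}
    (hfs : star f = f) (hf : f * f = f) (hf0 : f ≠ 0) :
    ∃ e : A, star e = e ∧ f * e = e ∧ e ≠ 0 ∧
      ∀ x y, e * (Δ (x + y) - Δ x - Δ y) * e = 0 := by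
  by_cases hab : ∃ e : A, star e = e ∧ e * e = e ∧ f * e = e ∧ e ≠ 0 ∧
      ∀ x y : A, (e * x * e) * (e * y * e) = (e * y * e) * (e * x * e)
  · obtain ⟨e, h1, h2, h3, h4, h5⟩ := hab
    exact ⟨e, h1, h3, h4, abelian_additive hΔ h2 h1 h5⟩
  have split : ∀ e : A, star e = e → e * e = e → f * e = e → e ≠ 0 →
      ∃ g v : A, star g = g ∧ g * g = g ∧ e * g = g ∧ g * v = v ∧ v ≠ 0 ∧
        (star v * v) * (star v * v) = star v * v ∧ v * (star v * v) = v ∧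
        (e - g) * (star v * v) = star v * v := by
    intro e h1 h2 h3 h4
    have hnc : ¬ ∀ x y : A, (e * x * e) * (e * y * e) = (e * y * e) * (e * x * e) :=
      fun hc => hab ⟨e, h1, h2, h3, h4, hc⟩
    obtain ⟨g, x, g1, g2, g3, g4⟩ := split_of_noncomm hR h1 h2 hnc
    have g5 : g * e = g := by
      have := congrArg star g3
      rwa [star_mul, h1, g1] at this
    have hqq : (e - g) * (e - g) = e - g := by
      rw [mul_sub, sub_mul, sub_mul, h2, g5, g3, g2]; abel
    obtain ⟨v, w, v1, v2, v3, v4, v5⟩ := partial_isometry hR g4 (q := e - g)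
      (by rw [star_sub, h1, g1]) (by rw [mul_assoc, hqq])
    refine ⟨g, v, g1, g2, g3, ?_, v2, v3, v4, v5⟩
    rw [v1, ← mul_assoc, ← mul_assoc, ← mul_assoc, g2]
  obtain ⟨g, v, g1, g2, g3, g4, v0, v1, v2, v3⟩ := split f hfs hf hf hf0
  have g5 : g * f = g := by
    have := congrArg star g3
    rwa [star_mul, hfs, g1] at this
  set p := star v * v with hp
  have hps : star p = p := by rw [hp, star_mul, star_star]
  have hp0 : p ≠ 0 := fun h => v0 (ssa_zero h)
  have hgp : g * p = 0 := by
    rw [← v3, ← mul_assoc, mul_sub, g5, g2, sub_self, zero_mul]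
  have hfp : f * p = p := by
    rw [← v3, ← mul_assoc, mul_sub, hf, g3]
  obtain ⟨g', v', g1', g2', g3', g4', v0', v1', v2', v3'⟩ := split p hps v1 hfp hp0
  have g5' : g' * p = g' := by
    have := congrArg star g3'
    rwa [star_mul, hps, g1'] at this
  set e := star v' * v' with he
  have hes : star e = e := by rw [he, star_mul, star_star]
  have he0 : e ≠ 0 := fun h => v0' (ssa_zero h)
  have hge' : g' * e = 0 := by
    rw [← v3', ← mul_assoc, mul_sub, g5', g2', sub_self, zero_mul]
  have heg' : e * g' = 0 := by
    have := congrArg star hge'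
    rwa [star_mul, hes, g1', star_zero] at this
  have hpe : p * e = e := by
    rw [← v3', ← mul_assoc, mul_sub, v1, g3']
  have hge : g * e = 0 := by rw [← hpe, ← mul_assoc, hgp, zero_mul]
  have heg : e * g = 0 := by
    have := congrArg star hge
    rwa [star_mul, hes, g1, star_zero] at this
  have hfe : f * e = e := by rw [← hpe, ← mul_assoc, hfp]
  have hgg' : g' * g = 0 := by
    have h1 : p * g = 0 := by
      have := congrArg star hgp
      rwa [star_mul, hps, g1, star_zero] at this
    rw [← g5', mul_assoc, h1, mul_zero]
  have hvg' : star v' * g' = star v' := by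
    have := congrArg star g4'
    rwa [star_mul, g1'] at this
  have hvv : star v' * v = 0 := by
    rw [← hvg', ← g4, mul_assoc, ← mul_assoc g', hgg', zero_mul, mul_zero]
  have hvv2 : star v * v' = 0 := by
    have := congrArg star hvv
    rwa [star_mul, star_star, star_zero] at this
  have hev' : e * v' = 0 := by rw [← g4', ← mul_assoc, heg', zero_mul]
  have hev : e * v = 0 := by rw [← g4, ← mul_assoc, heg, zero_mul]
  have hvpe : star v' * e = 0 := by
    have := congrArg star hev'
    rwa [star_mul, hes, star_zero] at this
  have hve : star v * e = 0 := by
    have := congrArg star hev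
    rwa [star_mul, hes, star_zero] at this
  refine ⟨e, hes, hfe, he0, matrix_additive hΔ v1' (s2 := v') (t2 := star v') (s3 := v * e)
    (t3 := e * star v) rfl ?_ ?_ ?_ hev' ?_ hvpe ?_ v2' ?_ ?_ ?_⟩
  · have : e * star v * (v * e) = e * (star v * v) * e := by noncomm_ring
    rw [this, ← hp, mul_assoc, hpe, v1']
  · rw [← mul_assoc, hvv, zero_mul]
  · rw [mul_assoc, hvv2, mul_zero]
  · rw [← mul_assoc, hev, zero_mul]
  · rw [mul_assoc, hve, mul_zero]
  · rw [mul_assoc, v1']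
  · have := congrArg star v2'
    rwa [star_mul, hes] at this
  · rw [← mul_assoc, v1']

lemma sa_zero (hR : Rick A) {d : A} (hd : IsSelfAdjoint d)
    (H : ∀ f : A, star f = f → f * f = f → f ≠ 0 →
      ∃ e : A, star e = e ∧ f * e = e ∧ e ≠ 0 ∧ e * d * e = 0) : d = 0 := by
  by_contra h0
  have main : ∀ d : A, IsSelfAdjoint d → (∃ t ∈ spectrum ℝ d, 0 < t) →
      (∀ f : A, star f = f → f * f = f → f ≠ 0 →
      ∃ e : A, star e = e ∧ f * e = e ∧ e ≠ 0 ∧ e * d * e = 0) → False := by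
    rintro d hd ⟨t, ht, ht0⟩ H
    obtain ⟨f, f1, f2, f3, f4⟩ := pos_proj hR hd ht ht0
    obtain ⟨e, e1, e2, e3, e4⟩ := H f f1 f2 f3
    exact e3 (f4 e e1 e2 e4)
  obtain ⟨t, ht0, ht⟩ := exists_pos_spec hd h0
  rcases lt_or_gt_of_ne ht0 with h | h
  · refine main (-d) hd.neg ⟨-t, ?_, by linarith⟩ ?_
    · rw [← spectrum.neg_eq, Set.neg_mem_neg]; exact ht
    · intro f f1 f2 f3
      obtain ⟨e, e1, e2, e3, e4⟩ := H f f1 f2 f3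
      exact ⟨e, e1, e2, e3, by rw [mul_neg, neg_mul, e4, neg_zero]⟩
  · exact main d hd ⟨t, ht, h⟩ H

theorem rickart_two_local (hR : Rick A) {Δ : A → A} (hΔ : Is2LocalDerivation Δ) :
    IsCDerivation Δ := by
  have hadd : ∀ x y, Δ (x + y) = Δ x + Δ y := by
    intro x y
    set d := Δ (x + y) - Δ x - Δ y with hd
    have hst : ∀ e : A, star e = e → e * d * e = 0 → e * star d * e = 0 := by
      intro e h1 h2
      have := congrArg star h2
      rwa [star_mul, star_mul, h1, star_zero, ← mul_assoc] at this
    have h1 : d + star d = 0 := by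
      apply sa_zero hR (IsSelfAdjoint.add_star_self d)
      intro f f1 f2 f3
      obtain ⟨e, e1, e2, e3, e4⟩ := exists_good hR hΔ f1 f2 f3
      refine ⟨e, e1, e2, e3, ?_⟩
      rw [mul_add, add_mul, hst e e1 (e4 x y), e4 x y, add_zero]
    have h2 : Complex.I • (d - star d) = 0 := by
      apply sa_zero hR
      · rw [isSelfAdjoint_iff, star_smul, star_sub, star_star]
        simp
        rw [← smul_neg, neg_sub]
      intro f f1 f2 f3
      obtain ⟨e, e1, e2, e3, e4⟩ := exists_good hR hΔ f1 f2 f3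
      refine ⟨e, e1, e2, e3, ?_⟩
      rw [mul_smul_comm, smul_mul_assoc, mul_sub, sub_mul, hst e e1 (e4 x y), e4 x y, sub_zero,
        smul_zero]
    have h2' : d - star d = 0 := (smul_eq_zero.mp h2).resolve_left Complex.I_ne_zero
    have h3 : (2 : ℂ) • d = 0 := by
      have : (2 : ℂ) • d = (d + star d) + (d - star d) := by rw [two_smul]; abel
      rw [this, h1, h2', add_zero]
    have h4 : d = 0 := (smul_eq_zero.mp h3).resolve_left two_ne_zero
    rw [hd, sub_sub, sub_eq_zero] at h4
    exact h4
  refine ⟨hadd, ?_, ?_⟩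
  · intro c x
    obtain ⟨D, hD, h1, h2⟩ := hΔ x (c • x)
    rw [h1, h2, hD.2.1]
  · intro a b
    let δ : A →+ A := AddMonoidHom.mk' Δ hadd
    refine jordan_der (R := A) ?_ ?_ δ ?_ a b
    · intro x hx
      rw [← two_smul ℂ] at hx
      exact (smul_eq_zero.mp hx).resolve_left two_ne_zero
    · intro a ha
      have h1 := ha (star a)
      have h2 : star a * a = 0 := by
        apply ssa_zero
        rw [star_mul, star_star, mul_assoc, ← mul_assoc a, h1, mul_zero]
      exact ssa_zero h2
    · intro x
      obtain ⟨D, hD, h1, h2⟩ := hΔ x (x * x)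
      change Δ (x * x) = Δ x * x + x * Δ x
      rw [h1, h2, hD.2.2]

end rickart

end TwoLocal

namespace TwoLocal

section vn

variable {H : Type*} [NormedAddCommGroup H] [InnerProductSpace ℂ H] [CompleteSpace H]

lemma vn_range_proj (M : VonNeumannAlgebra H) (T : H →L[ℂ] H) (hT : T ∈ M) :
    ∃ g ∈ M, star g = g ∧ g * g = g ∧ g * T = T ∧ ∀ X : H →L[ℂ] H, X * T = 0 → X * g = 0 := by
  let K : Submodule ℂ H := T.range.topologicalClosure
  have hKc : IsClosed (K : Set H) := T.range.isClosed_topologicalClosure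
  haveI : CompleteSpace K := hKc.completeSpace_coe
  have hpr : IsStarProjection K.starProjection := isStarProjection_starProjection
  have hrange : K.starProjection.range = K := Submodule.range_starProjection K
  refine ⟨K.starProjection, ?_, hpr.isSelfAdjoint.star_eq, hpr.isIdempotentElem, ?_, ?_⟩
  · rw [VonNeumannAlgebra.IsStarProjection.mem_iff hpr]
    intro y hy
    rw [hrange, Module.End.mem_invtSubmodule]
    have hyT : T * y = y * T := (VonNeumannAlgebra.mem_commutant_iff.mp hy T hT)
    intro z hz
    have h1 : Set.MapsTo y (T.range : Set H) (T.range : Set H) := by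
      rintro _ ⟨w, rfl⟩
      exact ⟨y w, DFunLike.congr_fun hyT w⟩
    exact h1.closure y.continuous hz
  · ext w
    change K.starProjection (T w) = T w
    rw [Submodule.starProjection_eq_self_iff]
    exact T.range.le_topologicalClosure ⟨w, rfl⟩
  · intro X hX
    ext w
    change X (K.starProjection w) = 0
    have hw : K.starProjection w ∈ K := Submodule.starProjection_apply_mem K w
    have hle : K ≤ X.ker := by
      apply Submodule.topologicalClosure_minimal
      · rintro _ ⟨w, rfl⟩
        exact DFunLike.congr_fun hX w
      · exact X.isClosed_ker
    exact hle hw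

lemma vn_two_local (M : VonNeumannAlgebra H) {Δ : M → M} (hΔ : Is2LocalDerivation Δ) :
    IsCDerivation Δ := by
  have hclosed : IsClosed (M.toStarSubalgebra : Set (H →L[ℂ] H)) := by
    have : (M.toStarSubalgebra : Set (H →L[ℂ] H)) =
        Set.centralizer (Set.centralizer (M : Set (H →L[ℂ] H))) :=
      (M.centralizer_centralizer).symm
    rw [this]
    exact Set.isClosed_centralizer _
  letI i1 : CStarAlgebra M.toStarSubalgebra :=
    StarSubalgebra.cstarAlgebra M.toStarSubalgebra (h_closed := hclosed)
  have hR : Rick M.toStarSubalgebra := by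
    intro T hT
    obtain ⟨g, h1, h2, h3, h4, h5⟩ := vn_range_proj M T.1 T.2
    refine ⟨⟨g, h1⟩, Subtype.ext h2, Subtype.ext h3, Subtype.ext h4, ?_⟩
    intro X hX
    exact Subtype.ext (h5 X.1 (congrArg Subtype.val hX))
  exact rickart_two_local hR (A := M.toStarSubalgebra) (Δ := Δ) hΔ

end vn

end TwoLocal

namespace TwoLocal

section cont

lemma sqrt_factor {Ω E : Type*} [TopologicalSpace Ω] [NormedAddCommGroup E] [NormedSpace ℂ E]
    (f : C(Ω, E)) : Continuous fun s => (((√‖f s‖)⁻¹ : ℝ) : ℂ) • f s := by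
  have hn : ∀ s, ‖(((√‖f s‖)⁻¹ : ℝ) : ℂ) • f s‖ = √‖f s‖ := by
    intro s
    rw [norm_smul, Complex.norm_real, Real.norm_eq_abs, abs_of_nonneg (by positivity)]
    rcases eq_or_lt_of_le (norm_nonneg (f s)) with h | h
    · rw [← h]; simp
    · have h1 := Real.mul_self_sqrt h.le
      have h2 : √‖f s‖ ≠ 0 := (Real.sqrt_pos.mpr h).ne'
      nth_rewrite 2 [← h1]
      rw [← mul_assoc, inv_mul_cancel₀ h2, one_mul]
  rw [continuous_iff_continuousAt]
  intro s
  by_cases hs : f s = 0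
  · have : (((√‖f s‖)⁻¹ : ℝ) : ℂ) • f s = 0 := by simp [hs]
    rw [ContinuousAt, this, tendsto_zero_iff_norm_tendsto_zero]
    simp only [hn]
    have hc : Continuous fun s => √‖f s‖ := by fun_prop
    have := hc.tendsto s
    simpa [hs] using this
  · have hc : Continuous fun s => √‖f s‖ := by fun_prop
    have h0 : √‖f s‖ ≠ 0 := (Real.sqrt_pos.mpr (norm_pos_iff.mpr hs)).ne'
    exact (Complex.continuous_ofReal.continuousAt.comp (hc.continuousAt.inv₀ h0)).smul
      f.continuous.continuousAt

variable {Ω H : Type*} [TopologicalSpace Ω] [CompactSpace Ω]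
    [NormedAddCommGroup H] [InnerProductSpace ℂ H] [CompleteSpace H]
    {M : VonNeumannAlgebra H}

lemma der_local {D : C(Ω, M) → C(Ω, M)} (hD : IsCDerivation D) (f : C(Ω, M)) (t : Ω)
    (hf : f t = 0) : D f t = 0 := by
  let g : C(Ω, M) := ⟨fun s => ((√‖f s‖ : ℝ) : ℂ) • (1 : M), by fun_prop⟩
  let h : C(Ω, M) := ⟨fun s => (((√‖f s‖)⁻¹ : ℝ) : ℂ) • f s, sqrt_factor f⟩
  have hgh : f = g * h := by
    ext1 s
    change f s = (((√‖f s‖ : ℝ) : ℂ) • (1 : M)) * ((((√‖f s‖)⁻¹ : ℝ) : ℂ) • f s)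
    by_cases hs : f s = 0
    · rw [hs, smul_zero, mul_zero]
    · have h0 : √‖f s‖ ≠ 0 := (Real.sqrt_pos.mpr (norm_pos_iff.mpr hs)).ne'
      rw [smul_mul_assoc, one_mul, smul_smul, ← Complex.ofReal_mul, mul_inv_cancel₀ h0,
        Complex.ofReal_one, one_smul]
  have hg0 : g t = 0 := by
    change ((√‖f t‖ : ℝ) : ℂ) • (1 : M) = 0
    rw [hf]; simp
  have hh0 : h t = 0 := by
    change (((√‖f t‖)⁻¹ : ℝ) : ℂ) • f t = 0
    rw [hf, smul_zero]
  rw [hgh, hD.2.2, ContinuousMap.add_apply, ContinuousMap.mul_apply, ContinuousMap.mul_apply,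
    hg0, hh0, mul_zero, zero_mul, add_zero]

lemma der_local_eq {D : C(Ω, M) → C(Ω, M)} (hD : IsCDerivation D) (f g : C(Ω, M)) (t : Ω)
    (hf : f t = g t) : D f t = D g t := by
  have h1 := hD.1 (f - g) g
  have h2 := der_local hD (f - g) t (by rw [ContinuousMap.sub_apply, hf, sub_self])
  rw [sub_add_cancel] at h1
  rw [h1, ContinuousMap.add_apply, h2, zero_add]

end cont

end TwoLocal


theorem stmt17 {Ω H : Type*} [TopologicalSpace Ω] [CompactSpace Ω] [T2Space Ω]
    [NormedAddCommGroup H] [InnerProductSpace ℂ H] [CompleteSpace H]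
    (M : VonNeumannAlgebra H)
    (Δ : C(Ω, M) → C(Ω, M)) (hΔ : Is2LocalDerivation Δ) :
    IsCDerivation Δ := by
  have hloc : ∀ (f : C(Ω, M)) (t : Ω), Δ f t = Δ (ContinuousMap.const Ω (f t)) t := by
    intro f t
    obtain ⟨D, hD, h1, h2⟩ := hΔ f (ContinuousMap.const Ω (f t))
    rw [h1, h2]
    exact TwoLocal.der_local_eq hD _ _ t rfl
  have hpt : ∀ t : Ω, IsCDerivation (fun m : M => Δ (ContinuousMap.const Ω m) t) := by
    intro t
    apply TwoLocal.vn_two_local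
    intro x y
    obtain ⟨D, hD, h1, h2⟩ := hΔ (ContinuousMap.const Ω x) (ContinuousMap.const Ω y)
    refine ⟨fun m => D (ContinuousMap.const Ω m) t, ⟨?_, ?_, ?_⟩, by simp only [h1], by simp only [h2]⟩
    · intro a b
      have : ContinuousMap.const Ω (a + b) = ContinuousMap.const Ω a + ContinuousMap.const Ω b := rfl
      simp only [this, hD.1]; rfl
    · intro c a
      have : ContinuousMap.const Ω (c • a) = c • ContinuousMap.const Ω a := rfl
      simp only [this, hD.2.1]; rfl
    · intro a b
      have : ContinuousMap.const Ω (a * b) = ContinuousMap.const Ω a * ContinuousMap.const Ω b := rfl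
      simp only [this, hD.2.2]; rfl
  refine ⟨?_, ?_, ?_⟩
  · intro x y
    ext1 t
    rw [ContinuousMap.add_apply, hloc (x + y) t, hloc x t, hloc y t]
    exact (hpt t).1 (x t) (y t)
  · intro c x
    ext1 t
    rw [ContinuousMap.smul_apply, hloc (c • x) t, hloc x t]
    exact (hpt t).2.1 c (x t)
  · intro x y
    ext1 t
    rw [ContinuousMap.add_apply, ContinuousMap.mul_apply, ContinuousMap.mul_apply,
      hloc (x * y) t, hloc x t, hloc y t]
    exact (hpt t).2.2 (x t) (y t)
end
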